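/- Let N ≥ 2, let B ⊂ ℝ^N be a bounded radial domain, let 𝓑 ⊂ ℝ × ℝ^N × ℝ^{N×N} be open convex with (0,0,0) ∈ 𝓑, and let F : [0,∞) × B̄ × 𝓑 → ℝ satisfy (F1) reflection invariance (B × 𝓑 invariant under (x,u,p,q) ↦ (Rx,u,Rp,RqR) for every hyperplane reflection R and F(t,Rx,u,Rp,RqR) = F(t,x,u,p,q)), (F2) continuity, uniform Lipschitz continuity in (u,p,q), and differentiability in q, (F3) boundedness of F(·,·,0,0,0), and (F4) uniform ellipticity with constant α₀ > 0. Let u ∈ C^{2,1}(B × (0,∞)) ∩ C(B̄ × [0,∞)) be a classical solution of u_t = F(t,x,u,∇u,D²u) in B × (0,∞), u = 0 on ∂B × (0,∞), u(·,0) = u₀, with sup_{t≥0} ‖u(·,t)‖_{L^∞(B)} < ∞. Define 𝓜 = {e ∈ S : z(x) ≥ z(σ_e(x)) for all x ∈ B(e) and all z ∈ ω(u)}. If e ∈ S satisfies u₀(x) ≥ u₀(σ_e(x)) for all x ∈ B(e) and u₀ ∘ σ_e ≢ u₀ on B(e), then there is ε > 0 such that e' ∈ 𝓜 for all e' ∈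 S with |e' − e| < ε. -/

import Mathlib

/-!
For a unit vector `e` put `w_e = u - u ∘ σ_e`. Reflection invariance of `F`, convexity of `𝓑` and
the mean value theorem show that `w_e` satisfies a linear parabolic inequality. Its coefficients
are handled only through bounds: `w_e` is a supersolution (`SuperAt`) for the whole class of
linear operators with ellipticity constant `α₀` and coefficients bounded by `L` (`superAt_diff`),
and it is compared with functions that are subsolutions (`SubAt`) for that class (`comparison`).

*Strict positivity for the given direction.* On the flat part of the boundary of `B(e)` and on
`∂B` the function `w_e` vanishes, so `w_e ≥ 0` by comparison with `0`. Positivity at a single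
point at time `0` spreads to all of the connected set `B(e)` at every positive time
(`propagate`, `reflDiff_pos`); the barrier is a bump moving with constant speed.

*Nearby directions.* For `e'` close to `e`, the function `w_{e'}(·, 1)` is bounded below by a
fixed `η > 0` away from the boundary of `B(e')` and is at least `-ε` everywhere. Let `Θ` be a
radial defining function of `B` and `g = ⟪x, e'⟫ Θ`. The barrier
`ψ = e^{-κ(t-1)} (A ((g - s)₊)^{k+3} + ε h)`, where `-3 ≤ h ≤ -1` is built from the layers
`((1 - ⟪x, e'⟫/δ)₊)³` and `((1 - Θ/δ)₊)³`, is a subsolution whose constants do not depend on `e'`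
(`exists_barrier`): in the layers the large second derivative of `h` dominates, and elsewhere the
first term does, its power being large enough that `|∇g|² ≥ c₁ g - C g²` absorbs the lower-order
terms. This includes the edge `∂B ∩ H(e')`, where `∇g` vanishes. Comparison from time `1` on gives
`w_{e'} ≥ -3 ε e^{-κ(t-1)}`, so in the limit `z ≥ z ∘ σ_{e'}` on `B(e')` for every `z ∈ ω(u)`
(`nbhd_of_superAt`).
-/

open Set Metric Filter
open scoped RealInnerProductSpace

noncomputable section

variable {N : ℕ}

/-- Reflection through the hyperplane `H(e) = {x : ⟪x,e⟫ = 0}`: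
`σ_e(x) = x - 2 (x·e) e`. -/
def reflHyp (e x : EuclideanSpace ℝ (Fin N)) : EuclideanSpace ℝ (Fin N) :=
  x - (2 * ⟪x, e⟫) • e

/-- The half domain `B(e) = {x ∈ B : x·e > 0}`. -/
def halfDom (B : Set (EuclideanSpace ℝ (Fin N))) (e : EuclideanSpace ℝ (Fin N)) :
    Set (EuclideanSpace ℝ (Fin N)) := {x ∈ B | 0 < ⟪x, e⟫}

/-- A (bounded) radial domain: an open ball or an open annulus centered at the origin. -/
def IsRadialDomain (B : Set (EuclideanSpace ℝ (Fin N))) : Prop :=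
  (∃ R, 0 < R ∧ B = Metric.ball 0 R) ∨
  (∃ r R, 0 < r ∧ r < R ∧ B = {x : EuclideanSpace ℝ (Fin N) | r < ‖x‖ ∧ ‖x‖ < R})

/-- `u` is foliated Schwarz symmetric on `D` with respect to the unit vector `p`:
`u(x) ≥ u(y)` whenever `|x| = |y|` and `x·p ≥ y·p`.  (This is equivalent to axial
symmetry with respect to `ℝp` together with monotonicity in the polar angle.) -/
def FoliatedSchwarzOn (D : Set (EuclideanSpace ℝ (Fin N)))
    (u : EuclideanSpace ℝ (Fin N) → ℝ) (p : EuclideanSpace ℝ (Fin N)) : Prop :=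
  ∀ x ∈ D, ∀ y ∈ D, ‖x‖ = ‖y‖ → ⟪y, p⟫ ≤ ⟪x, p⟫ → u y ≤ u x

/-- The omega limit set of a (bounded) solution `u = u(x,t)`: all continuous
functions `z` on `B̄` which are uniform limits on `B̄` of `u(·, tₙ)` for some
sequence `tₙ → ∞`. -/
def omegaLimitSet (B : Set (EuclideanSpace ℝ (Fin N)))
    (u : EuclideanSpace ℝ (Fin N) → ℝ → ℝ) : Set (EuclideanSpace ℝ (Fin N) → ℝ) :=
  {z | ContinuousOn z (closure B) ∧ ∃ t : ℕ → ℝ, Tendsto t atTop atTop ∧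
    ∀ ε > 0, ∃ n₀ : ℕ, ∀ n ≥ n₀, ∀ x ∈ closure B, |u x (t n) - z x| ≤ ε}

/-- The matrix of the reflection through the hyperplane orthogonal to `e`:
`R_{ij} = δ_{ij} − 2 eᵢ eⱼ`. -/
def reflMat (e : EuclideanSpace ℝ (Fin N)) : Fin N → Fin N → ℝ :=
  fun i j => (if i = j then (1:ℝ) else 0) - 2 * e i * e j

/-- The conjugation `R q R` of a matrix `q` by a (symmetric) matrix `R`. -/
def matConj (R q : Fin N → Fin N → ℝ) : Fin N → Fin N → ℝ :=
  fun i j => ∑ k, ∑ l, R i k * q k l * R l j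

/-- The gradient vector `∇u ∈ ℝᴺ` associated with a differential `Du`. -/
def gradVec (Du : EuclideanSpace ℝ (Fin N) →L[ℝ] ℝ) : EuclideanSpace ℝ (Fin N) :=
  (EuclideanSpace.equiv (Fin N) ℝ).symm (fun i => Du (EuclideanSpace.single i 1))

/-- The Hessian matrix `D²u = (u_{xᵢxⱼ})` associated with a second differential. -/
def hessMat (D2 : EuclideanSpace ℝ (Fin N) →L[ℝ] EuclideanSpace ℝ (Fin N) →L[ℝ] ℝ) :
    Fin N → Fin N → ℝ :=
  fun i j => D2 (EuclideanSpace.single i 1) (EuclideanSpace.single j 1)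

/-- The set `𝓜 = {e ∈ S : z ≥ z ∘ σ_e on B(e) for all z ∈ ω(u)}`. -/
def omegaReflSet (B : Set (EuclideanSpace ℝ (Fin N)))
    (u : EuclideanSpace ℝ (Fin N) → ℝ → ℝ) : Set (EuclideanSpace ℝ (Fin N)) :=
  {e | ‖e‖ = 1 ∧ ∀ z ∈ omegaLimitSet B u, ∀ x ∈ halfDom B e, z (reflHyp e x) ≤ z x}

open scoped Topology

/-! ### Second-order jets -/

/-- Euclidean space `ℝᴺ`. -/
abbrev EN (N : ℕ) := EuclideanSpace ℝ (Fin N)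

/-- `f` is twice differentiable at `x`, with gradient `v` and Hessian `Q`
(as a self-map of `ℝᴺ`). -/
def Jet2 (f : EN N → ℝ) (x v : EN N) (Q : EN N →L[ℝ] EN N) : Prop :=
  ∃ G : EN N → EN N, (∀ᶠ y in 𝓝 x, HasFDerivAt f (innerSL ℝ (G y)) y) ∧ G x = v ∧
    HasFDerivAt G Q x

/-- The rank-one map `w ↦ ⟪v, w⟫ z`. -/
def rk1 (v z : EN N) : EN N →L[ℝ] EN N := (innerSL ℝ v).smulRight z

/-- The matrix of a linear map, with the index convention of `hessMat`. -/
def qmat (Q : EN N →L[ℝ] EN N) : Fin N → Fin N → ℝ :=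
  fun i j => Q (EuclideanSpace.single i 1) j

lemma qmat_add (Q Q' : EN N →L[ℝ] EN N) : qmat (Q + Q') = qmat Q + qmat Q' := by
  ext i j; simp [qmat]

lemma qmat_sub (Q Q' : EN N →L[ℝ] EN N) : qmat (Q - Q') = qmat Q - qmat Q' := by
  ext i j; simp [qmat]

lemma qmat_smul (c : ℝ) (Q : EN N →L[ℝ] EN N) : qmat (c • Q) = c • qmat Q := by
  ext i j; simp [qmat]

lemma qmat_rk1 (v z : EN N) : qmat (rk1 v z) = fun i j => v i * z j := by
  ext i j; simp [qmat, rk1, EuclideanSpace.inner_single_right]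

lemma norm_qmat_le (Q : EN N →L[ℝ] EN N) : ‖qmat Q‖ ≤ ‖Q‖ := by
  refine (pi_norm_le_iff_of_nonneg (norm_nonneg _)).2 fun i => ?_
  refine (pi_norm_le_iff_of_nonneg (norm_nonneg _)).2 fun j => ?_
  calc ‖qmat Q i j‖ ≤ ‖Q (EuclideanSpace.single i 1)‖ := PiLp.norm_apply_le _ j
    _ ≤ ‖Q‖ * ‖EuclideanSpace.single i (1:ℝ)‖ := Q.le_opNorm _
    _ = ‖Q‖ := by simp

lemma norm_rk1_le (v z : EN N) : ‖rk1 v z‖ ≤ ‖v‖ * ‖z‖ := by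
  simp [rk1]

lemma Jet2.const (c : ℝ) (x : EN N) : Jet2 (fun _ => c) x 0 0 :=
  ⟨fun _ => 0, by simp [hasFDerivAt_const], rfl, hasFDerivAt_const _ _⟩

lemma Jet2.add {f g : EN N → ℝ} {x v w : EN N} {Q Q' : EN N →L[ℝ] EN N}
    (hf : Jet2 f x v Q) (hg : Jet2 g x w Q') :
    Jet2 (fun y => f y + g y) x (v + w) (Q + Q') := by
  obtain ⟨G, h1, h2, h3⟩ := hf
  obtain ⟨G', h1', h2', h3'⟩ := hg
  refine ⟨fun y => G y + G' y, ?_, by simp [h2, h2'], h3.add h3'⟩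
  filter_upwards [h1, h1'] with y a b
  exact (a.add b).congr_fderiv (by simp)

lemma Jet2.const_mul {f : EN N → ℝ} {x v : EN N} {Q : EN N →L[ℝ] EN N}
    (hf : Jet2 f x v Q) (c : ℝ) : Jet2 (fun y => c * f y) x (c • v) (c • Q) := by
  obtain ⟨G, h1, h2, h3⟩ := hf
  refine ⟨fun y => c • G y, ?_, by simp [h2], h3.const_smul c⟩
  filter_upwards [h1] with y a
  simpa using a.const_mul c

lemma Jet2.sub {f g : EN N → ℝ} {x v w : EN N} {Q Q' : EN N →L[ℝ] EN N}
    (hf : Jet2 f x v Q) (hg : Jet2 g x w Q') :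
    Jet2 (fun y => f y - g y) x (v - w) (Q - Q') := by
  have := hf.add (hg.const_mul (-1))
  have e1 : Q - Q' = Q + (-1 : ℝ) • Q' := by ext a i; simp [sub_eq_add_neg]
  have e2 : v - w = v + (-1 : ℝ) • w := by ext i; simp [sub_eq_add_neg]
  rw [e1, e2]
  simpa [sub_eq_add_neg] using this

lemma Jet2.comp {f : EN N → ℝ} {x v : EN N} {Q : EN N →L[ℝ] EN N}
    (hf : Jet2 f x v Q) {h h' : ℝ → ℝ} {h'' : ℝ} (hh : ∀ y, HasDerivAt h (h' y) y)
    (hh' : HasDerivAt h' h'' (f x)) :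
    Jet2 (fun y => h (f y)) x (h' (f x) • v) (h' (f x) • Q + h'' • rk1 v v) := by
  obtain ⟨G, h1, h2, h3⟩ := hf
  refine ⟨fun y => h' (f y) • G y, ?_, by simp [h2], ?_⟩
  · filter_upwards [h1] with y a
    exact ((hh (f y)).comp_hasFDerivAt y a).congr_fderiv (by simp)
  · have hx := h1.self_of_nhds
    have := (hh'.comp_hasFDerivAt x hx).smul h3
    refine this.congr_fderiv ?_
    ext w i
    simp [rk1, h2]
    ring

lemma Jet2.mul {f g : EN N → ℝ} {x v w : EN N} {Q Q' : EN N →L[ℝ] EN N}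
    (hf : Jet2 f x v Q) (hg : Jet2 g x w Q') :
    Jet2 (fun y => f y * g y) x (f x • w + g x • v)
      (f x • Q' + g x • Q + (rk1 v w + rk1 w v)) := by
  obtain ⟨G, h1, h2, h3⟩ := hf
  obtain ⟨G', h1', h2', h3'⟩ := hg
  refine ⟨fun y => f y • G' y + g y • G y, ?_, by simp [h2, h2'], ?_⟩
  · filter_upwards [h1, h1'] with y a b
    exact (a.mul b).congr_fderiv (by simp)
  · have := (h1.self_of_nhds.smul h3').add (h1'.self_of_nhds.smul h3)
    refine this.congr_fderiv ?_
    ext w i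
    simp [rk1, h2, h2']
    ring

lemma Jet2.inner (e x : EN N) : Jet2 (fun y => ⟪y, e⟫) x e 0 := by
  refine ⟨fun _ => e, Eventually.of_forall fun y => ?_, rfl, hasFDerivAt_const _ _⟩
  have := (innerSL ℝ e).hasFDerivAt (x := y)
  refine this.congr_of_eventuallyEq (Eventually.of_forall fun z => ?_)
  simp [real_inner_comm]

lemma Jet2.normSq (c x : EN N) :
    Jet2 (fun y => ‖y - c‖ ^ 2) x ((2:ℝ) • (x - c)) ((2:ℝ) • ContinuousLinearMap.id ℝ (EN N)) := by
  refine ⟨fun y => (2:ℝ) • (y - c), Eventually.of_forall fun y => ?_, rfl, ?_⟩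
  · have := ((hasFDerivAt_id y).sub_const c).norm_sq
    refine this.congr_fderiv ?_
    ext w
    simp
  · exact ((hasFDerivAt_id x).sub_const c).const_smul (2:ℝ)

lemma Jet2.symm {f : EN N → ℝ} {x v : EN N} {Q : EN N →L[ℝ] EN N}
    (hf : Jet2 f x v Q) (a b : EN N) : ⟪Q a, b⟫ = ⟪Q b, a⟫ := by
  obtain ⟨G, h1, h2, h3⟩ := hf
  have h4 : HasFDerivAt (fun y => innerSL ℝ (G y)) ((innerSL ℝ).comp Q) x :=
    (innerSL ℝ (E := EN N)).hasFDerivAt.comp x h3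
  simpa using second_derivative_symmetric_of_eventually h1 h4 a b

lemma isLocalMin_second {φ φ' : ℝ → ℝ} {m : ℝ} (h1 : ∀ᶠ s in 𝓝 (0:ℝ), HasDerivAt φ (φ' s) s)
    (h2 : HasDerivAt φ' m 0) (hmin : IsLocalMin φ 0) : 0 ≤ m := by
  by_contra! hm
  have hd : deriv φ =ᶠ[𝓝 0] φ' := h1.mono fun s hs => hs.deriv
  have h0 : φ' 0 = 0 := hmin.hasDerivAt_eq_zero h1.self_of_nhds
  have hdd : deriv (deriv φ) 0 = m := by rw [hd.deriv_eq, h2.deriv]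
  have hmax : IsLocalMax φ 0 := isLocalMax_of_deriv_deriv_neg (by rw [hdd]; exact hm)
    (by rw [hd.self_of_nhds, h0]) h1.self_of_nhds.continuousAt
  have hc : φ =ᶠ[𝓝 0] fun _ => φ 0 := by
    filter_upwards [hmin, hmax] with s a b using le_antisymm b a
  have hz : deriv φ =ᶠ[𝓝 0] fun _ => 0 := by
    have := hc.deriv
    simpa using this
  have : deriv (deriv φ) 0 = 0 := by rw [hz.deriv_eq]; simp
  linarith

lemma Jet2.localMin {f : EN N → ℝ} {x v : EN N} {Q : EN N →L[ℝ] EN N}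
    (hf : Jet2 f x v Q) (hmin : IsLocalMin f x) : v = 0 ∧ ∀ a, 0 ≤ ⟪Q a, a⟫ := by
  obtain ⟨G, h1, h2, h3⟩ := hf
  constructor
  · have := hmin.hasFDerivAt_eq_zero h1.self_of_nhds
    rw [h2] at this
    have h := congrArg (fun T => T v) this
    simpa using h
  · intro a
    have hl : ∀ s : ℝ, HasDerivAt (fun s : ℝ => x + s • a) a s := fun s => by
      simpa using ((hasDerivAt_id s).smul_const a).const_add x
    have hc : Tendsto (fun s : ℝ => x + s • a) (𝓝 0) (𝓝 x) := by
      simpa using (hl 0).continuousAt.tendsto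
    refine isLocalMin_second (φ := fun s => f (x + s • a)) (φ' := fun s => ⟪G (x + s • a), a⟫)
      ?_ ?_ ?_
    · filter_upwards [hc.eventually h1] with s hs
      exact (hs.comp_hasDerivAt s (hl s)).congr_deriv (by simp)
    · have h3' : HasFDerivAt G Q (x + (0:ℝ) • a) := by simpa using h3
      have := (h3'.comp_hasDerivAt (0:ℝ) (hl 0)).inner ℝ (hasDerivAt_const (0:ℝ) a)
      simpa using this
    · have : ∀ᶠ s in 𝓝 (0:ℝ), f x ≤ f (x + s • a) := hc.eventually hmin
      simpa [IsLocalMin, IsMinFilter] using this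

/-! ### Linear elliptic classes and the comparison principle -/

/-- Linear functionals `q ↦ aᵢⱼ qᵢⱼ` on matrices with ellipticity constant `α` and bound `L`. -/
def EllClass (N : ℕ) (α L : ℝ) : Set ((Fin N → Fin N → ℝ) →L[ℝ] ℝ) :=
  {ℓ | (∀ ξ : Fin N → ℝ, α * ∑ i, ξ i ^ 2 ≤ ℓ (fun i j => ξ i * ξ j)) ∧ ∀ q, |ℓ q| ≤ L * ‖q‖}

lemma ell_psd {α L : ℝ} (hα : 0 ≤ α) {ℓ : (Fin N → Fin N → ℝ) →L[ℝ] ℝ}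
    (hℓ : ℓ ∈ EllClass N α L) {Q : EN N →L[ℝ] EN N} (hs : ∀ a b, ⟪Q a, b⟫ = ⟪Q b, a⟫)
    (hp : ∀ a, 0 ≤ ⟪Q a, a⟫) : 0 ≤ ℓ (qmat Q) := by
  have hsym : ∀ i j, qmat Q i j = qmat Q j i := fun i j => by
    have := hs (EuclideanSpace.single i 1) (EuclideanSpace.single j 1)
    simpa [EuclideanSpace.inner_single_right, qmat] using this
  have hM : (Matrix.of (qmat Q)).PosSemidef := by
    refine Matrix.PosSemidef.of_dotProduct_mulVec_nonneg ?_ ?_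
    · ext i j; simpa using hsym j i
    · intro y
      have h := hp (WithLp.toLp 2 y)
      have hy : WithLp.toLp 2 y = ∑ i, y i • EuclideanSpace.single i (1:ℝ) := by
        ext j; simp [Finset.sum_apply, Pi.single_apply]
      have : ⟪Q (WithLp.toLp 2 y), WithLp.toLp 2 y⟫ = ∑ j, ∑ i, y j * (y i * qmat Q i j) := by
        have h1 : ∀ j, (Q (WithLp.toLp 2 y)) j = ∑ i, y i * qmat Q i j := fun j => by
          rw [hy]; simp [qmat, map_sum]
        simp [PiLp.inner_apply, h1, Finset.mul_sum]
      rw [this] at h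
      simp only [dotProduct, Matrix.mulVec, Matrix.of_apply, Finset.mul_sum]
      refine h.trans_eq (Finset.sum_congr rfl fun j _ => Finset.sum_congr rfl fun i _ => ?_)
      rw [hsym i j]
      simp only [Pi.star_apply, star_trivial]
      ring
  obtain ⟨n, C, hC⟩ := Matrix.posSemidef_iff_eq_sum_vecMulVec.1 hM
  have hq : qmat Q = ∑ k, fun i j => C k i * C k j := by
    ext i j
    have := congrFun (congrFun hC i) j
    simpa [Matrix.sum_apply, Matrix.vecMulVec_apply, Finset.sum_apply] using this
  rw [hq, map_sum]
  refine Finset.sum_nonneg fun k _ => le_trans ?_ (hℓ.1 (fun i => C k i))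
  exact mul_nonneg hα (Finset.sum_nonneg fun i _ => sq_nonneg _)

/-- `w` is at `(x, t)` a supersolution of every linear equation with coefficients in the class
`(α, L)`; the inequality is phrased through lower bounds `m` of the second-order terms. -/
def SuperAt (α L : ℝ) (w : EN N → ℝ → ℝ) (x : EN N) (t : ℝ) : Prop :=
  ∃ (wt : ℝ) (v : EN N) (Q : EN N →L[ℝ] EN N), HasDerivAt (fun s => w x s) wt t ∧
    Jet2 (fun y => w y t) x v Q ∧
    ∀ m, (∀ ℓ ∈ EllClass N α L, m ≤ ℓ (qmat Q)) → m - L * |w x t| - L * ‖v‖ ≤ wt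

/-- `ψ` is at `(x, t)` a subsolution of every linear equation with coefficients in the class
`(α, L)`. -/
def SubAt (α L : ℝ) (ψ : EN N → ℝ → ℝ) (x : EN N) (t : ℝ) : Prop :=
  ∃ (ψt : ℝ) (v : EN N) (Q : EN N →L[ℝ] EN N), HasDerivAt (fun s => ψ x s) ψt t ∧
    Jet2 (fun y => ψ y t) x v Q ∧
    ∀ ℓ ∈ EllClass N α L, ψt ≤ ℓ (qmat Q) - L * ‖v‖ - L * |ψ x t|

lemma deriv_nonpos_of_first {f : ℝ → ℝ} {d t t1 : ℝ} (ht : t1 < t) (hf : HasDerivAt f d t)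
    (hpos : ∀ s, t1 < s → s < t → 0 ≤ f s) (h0 : f t ≤ 0) : d ≤ 0 := by
  have h := (hasDerivWithinAt_iff_tendsto_slope' (s := Iio t) (by simp)).1 hf.hasDerivWithinAt
  refine le_of_tendsto h ?_
  filter_upwards [Ioo_mem_nhdsLT ht] with s hs
  rw [slope_def_field]
  exact div_nonpos_of_nonneg_of_nonpos (by linarith [hpos s hs.1 hs.2]) (by linarith [hs.2])

/-- Comparison principle on `D × [t₁, T]`, where `K` plays the role of the closure of `D`. -/
lemma comparison {α L : ℝ} (hα : 0 ≤ α) (hL : 0 ≤ L) {K D : Set (EN N)} (hK : IsCompact K)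
    (hD : IsOpen D) (hDK : D ⊆ K) {w ψ : EN N → ℝ → ℝ} {t1 T : ℝ}
    (hw : ContinuousOn (fun p : EN N × ℝ => w p.1 p.2) (K ×ˢ Icc t1 T))
    (hψ : ContinuousOn (fun p : EN N × ℝ => ψ p.1 p.2) (K ×ˢ Icc t1 T))
    (hinit : ∀ x ∈ K, ψ x t1 ≤ w x t1)
    (hbd : ∀ x ∈ K, x ∉ D → ∀ t, t1 < t → t ≤ T → ψ x t ≤ w x t)
    (hsup : ∀ x ∈ D, ∀ t, t1 < t → t ≤ T → SuperAt α L w x t)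
    (hsub : ∀ x ∈ D, ∀ t, t1 < t → t ≤ T → SubAt α L ψ x t) :
    ∀ x ∈ K, ∀ t ∈ Icc t1 T, ψ x t ≤ w x t := by
  -- after adding `μ e^{(L+1)t}` the comparison is strict
  have key : ∀ μ > 0, ∀ x ∈ K, ∀ t ∈ Icc t1 T,
      0 < w x t - ψ x t + μ * Real.exp ((L + 1) * t) := by
    intro μ hμ
    by_contra! hcon
    obtain ⟨x₁, hx₁, t₁, ht₁, hneg⟩ := hcon
    set V : EN N → ℝ → ℝ := fun x t => w x t - ψ x t + μ * Real.exp ((L + 1) * t) with hV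
    have hVc : ContinuousOn (fun p : EN N × ℝ => V p.1 p.2) (K ×ˢ Icc t1 T) :=
      (hw.sub hψ).add (by fun_prop)
    set Z := (K ×ˢ Icc t1 T) ∩ (fun p : EN N × ℝ => V p.1 p.2) ⁻¹' Iic 0 with hZ
    have hcomp : IsCompact (K ×ˢ Icc t1 T) := hK.prod isCompact_Icc
    have hZc : IsCompact Z := hcomp.of_isClosed_subset
      (hVc.preimage_isClosed_of_isClosed hcomp.isClosed isClosed_Iic) inter_subset_left
    obtain ⟨⟨y, τ⟩, hyZ, hmin⟩ := hZc.exists_isMinOn ⟨(x₁, t₁), ⟨hx₁, ht₁⟩, hneg⟩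
      (continuous_snd.continuousOn)
    obtain ⟨⟨hyK, hτ⟩, hVy⟩ := hyZ
    simp only [mem_preimage, mem_Iic] at hVy hyK hτ
    have hexp : ∀ s, 0 < μ * Real.exp ((L + 1) * s) := fun s => by positivity
    have hτ1 : t1 < τ := by
      rcases hτ.1.lt_or_eq with h | h
      · exact h
      · exfalso
        subst h
        have := hinit y hyK
        have := hexp t1
        simp only [hV] at hVy
        linarith
    have hyD : y ∈ D := by
      by_contra h
      have := hbd y hyK h τ hτ1 hτ.2
      have := hexp τ
      simp only [hV] at hVy
      linarith
    have hbefore : ∀ x ∈ K, ∀ s, t1 < s → s < τ → 0 < V x s := by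
      intro x hx s hs1 hs2
      by_contra! h
      have := hmin (show (x, s) ∈ Z from ⟨⟨hx, hs1.le, hs2.le.trans hτ.2⟩, h⟩)
      simp only [mem_ofPred_eq] at this
      linarith
    have hat : ∀ x ∈ K, 0 ≤ V x τ := by
      intro x hx
      have hc : ContinuousWithinAt (fun s => V x s) (Icc t1 T) τ :=
        (hVc (x, τ) ⟨hx, hτ⟩).comp (f := fun s => (x, s)) (by fun_prop) fun s hs => ⟨hx, hs⟩
      have hsubs : Ioo t1 τ ⊆ Icc t1 T := fun s hs => ⟨hs.1.le, hs.2.le.trans hτ.2⟩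
      have hc' := (hc.mono hsubs).tendsto
      have : (𝓝[Ioo t1 τ] τ).NeBot := by
        rw [nhdsWithin_Ioo_eq_nhdsLT hτ1]; infer_instance
      refine ge_of_tendsto hc' ?_
      filter_upwards [self_mem_nhdsWithin] with s hs using (hbefore x hx s hs.1 hs.2).le
    have hV0 : V y τ = 0 := le_antisymm hVy (hat y hyK)
    obtain ⟨wt, v, Q, hwt, hwj, hws⟩ := hsup y hyD τ hτ1 hτ.2
    obtain ⟨ψt, v', Q', hψt, hψj, hψs⟩ := hsub y hyD τ hτ1 hτ.2
    have hVt : HasDerivAt (fun s => V y s)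
        (wt - ψt + μ * (Real.exp ((L + 1) * τ) * (L + 1))) τ := by
      refine (hwt.sub hψt).add (HasDerivAt.const_mul μ ?_)
      simpa using ((hasDerivAt_id τ).const_mul (L + 1)).exp
    have hVt0 := deriv_nonpos_of_first hτ1 hVt (fun s h1 h2 => (hbefore y hyK s h1 h2).le) hVy
    have hVj := (hwj.sub hψj).add (Jet2.const (μ * Real.exp ((L + 1) * τ)) y)
    have hVmin : IsLocalMin (fun x => w x τ - ψ x τ + μ * Real.exp ((L + 1) * τ)) y := by
      filter_upwards [hD.mem_nhds hyD] with x hx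
      change V y τ ≤ V x τ
      rw [hV0]; exact hat x (hDK hx)
    obtain ⟨hv0, hQ0⟩ := hVj.localMin hVmin
    have hvv : v = v' := by simpa [sub_eq_zero] using hv0
    have hmono : ∀ ℓ ∈ EllClass N α L, ℓ (qmat Q') ≤ ℓ (qmat Q) := by
      intro ℓ hℓ
      have := ell_psd hα hℓ hVj.symm hQ0
      rw [add_zero, qmat_sub, map_sub] at this
      linarith
    have h1 := hws (ψt + L * ‖v'‖ + L * |ψ y τ|) fun ℓ hℓ => by
      have := hψs ℓ hℓ
      have := hmono ℓ hℓ
      linarith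
    have hweq : w y τ = ψ y τ - μ * Real.exp ((L + 1) * τ) := by
      simp only [hV] at hV0; linarith
    have h2 : |w y τ| ≤ |ψ y τ| + μ * Real.exp ((L + 1) * τ) := by
      rw [hweq]
      refine (abs_sub _ _).trans ?_
      rw [abs_of_pos (hexp τ)]
    have h3 := mul_le_mul_of_nonneg_left h2 hL
    have := hexp τ
    rw [hvv] at h1
    nlinarith
  intro x hx t ht
  refine le_of_forall_pos_le_add fun ε hε => ?_
  have := key (ε * Real.exp (-((L + 1) * t))) (by positivity) x hx t ht
  rw [mul_assoc, ← Real.exp_add] at this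
  simp at this
  linarith

/-! ### Linearization of the nonlinearity -/

lemma ell_of_lip {𝓑 : Set (ℝ × EN N × (Fin N → Fin N → ℝ))} (hO : IsOpen 𝓑)
    {Φ : (ℝ × EN N × (Fin N → Fin N → ℝ)) → ℝ} {α L : ℝ} (hL : 0 ≤ L)
    (hlip : ∀ P ∈ 𝓑, ∀ P' ∈ 𝓑, |Φ P - Φ P'| ≤ L * ‖P - P'‖)
    {ℓ : (Fin N → Fin N → ℝ) →L[ℝ] ℝ} {v : ℝ} {p : EN N} {q : Fin N → Fin N → ℝ}
    (hP : (v, p, q) ∈ 𝓑) (hd : HasFDerivAt (fun q' => Φ (v, p, q')) ℓ q)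
    (hell : ∀ ξ : Fin N → ℝ, α * ∑ i, ξ i ^ 2 ≤ ℓ (fun i j => ξ i * ξ j)) :
    ℓ ∈ EllClass N α L := by
  refine ⟨hell, fun q' => ?_⟩
  have hc : Continuous fun q' : Fin N → Fin N → ℝ => (v, p, q') := by fun_prop
  have hn : ‖ℓ‖ ≤ L := by
    refine hd.le_of_lip' hL ?_
    filter_upwards [(hO.preimage hc).mem_nhds hP] with q' hq'
    have := hlip _ hq' _ hP
    simpa [Prod.norm_def] using this
  exact (ℓ.le_opNorm q').trans (by gcongr)

/-- The mean value inequality for the nonlinearity: it is obtained by integrating lower Dini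
derivatives along the segment `[P', P] ⊆ 𝓑`, since `Φ` is only Lipschitz in its first
two arguments. -/
lemma meanval {𝓑 : Set (ℝ × EN N × (Fin N → Fin N → ℝ))} (hO : IsOpen 𝓑) (hC : Convex ℝ 𝓑)
    {Φ : (ℝ × EN N × (Fin N → Fin N → ℝ)) → ℝ}
    {Φq : (ℝ × EN N × (Fin N → Fin N → ℝ)) → ((Fin N → Fin N → ℝ) →L[ℝ] ℝ)}
    {α L : ℝ} (hL : 0 ≤ L)
    (hlip : ∀ P ∈ 𝓑, ∀ P' ∈ 𝓑, |Φ P - Φ P'| ≤ L * ‖P - P'‖)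
    (hd : ∀ v p q, (v, p, q) ∈ 𝓑 → HasFDerivAt (fun q' => Φ (v, p, q')) (Φq (v, p, q)) q)
    (hell : ∀ P ∈ 𝓑, ∀ ξ : Fin N → ℝ, α * ∑ i, ξ i ^ 2 ≤ Φq P (fun i j => ξ i * ξ j))
    {v v' : ℝ} {p p' : EN N} {q q' : Fin N → Fin N → ℝ}
    (hP : (v, p, q) ∈ 𝓑) (hP' : (v', p', q') ∈ 𝓑) {m : ℝ}
    (hm : ∀ ℓ ∈ EllClass N α L, m ≤ ℓ (q - q')) :
    m - L * |v - v'| - L * ‖p - p'‖ ≤ Φ (v, p, q) - Φ (v', p', q') := by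
  set c := m - L * |v - v'| - L * ‖p - p'‖ with hc
  set γ : ℝ → ℝ × EN N × (Fin N → Fin N → ℝ) :=
    fun s => (v' + s * (v - v'), p' + s • (p - p'), q' + s • (q - q')) with hγ
  have hγc : Continuous γ := by fun_prop
  have hγm : ∀ s ∈ Icc (0:ℝ) 1, γ s ∈ 𝓑 := by
    intro s hs
    have := hC hP' hP (sub_nonneg.2 hs.2) hs.1 (by ring)
    convert this using 1
    refine Prod.ext ?_ (Prod.ext ?_ ?_)
    · simp [hγ]; ring
    · simp only [hγ, Prod.snd_add, Prod.fst_add, Prod.smul_snd, Prod.smul_fst]; module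
    · simp only [hγ, Prod.snd_add, Prod.smul_snd]; module
  have hΦc : ContinuousOn Φ 𝓑 := by
    refine (LipschitzOnWith.of_dist_le_mul (K := ⟨L, hL⟩) fun P hP P' hP' => ?_).continuousOn
    rw [Real.dist_eq, dist_eq_norm]
    exact hlip P hP P' hP'
  have h0 : γ 0 = (v', p', q') := by simp [hγ]
  have h1 : γ 1 = (v, p, q) := by simp [hγ]
  have main : ∀ ε > 0, -Φ (v, p, q) ≤ -Φ (v', p', q') - c + ε := by
    intro ε hε
    have := image_le_of_liminf_slope_right_lt_deriv_boundary (a := 0) (b := 1)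
      (f := fun s => -Φ (γ s)) (f' := fun _ => -c) (B := fun s => -Φ (γ 0) + (-c + ε) * s)
      (B' := fun _ => -c + ε)
      ((hΦc.comp hγc.continuousOn hγm).neg) ?_ (by simp)
      (fun s => by simpa using ((hasDerivAt_id s).const_mul (-c + ε)).const_add (-Φ (γ 0)))
      (fun s _ _ => by linarith) (right_mem_Icc.2 zero_le_one)
    · simp only [h0, h1] at this
      linarith
    · intro s hs r hr
      refine Eventually.frequently ?_
      have hs' := hγm s ⟨hs.1, hs.2.le⟩
      set ℓ := Φq (γ s) with hℓ
      have hdℓ : HasFDerivAt (fun q'' => Φ ((γ s).1, (γ s).2.1, q'')) ℓ (γ s).2.2 :=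
        hd _ _ _ hs'
      have hℓm : m ≤ ℓ (q - q') :=
        hm ℓ (ell_of_lip hO hL hlip hs' hdℓ (hell _ hs'))
      -- the curve moving only the matrix argument
      set ζ : ℝ → ℝ × EN N × (Fin N → Fin N → ℝ) :=
        fun z => ((γ s).1, (γ s).2.1, (γ s).2.2 + (z - s) • (q - q')) with hζ
      have hζc : Continuous ζ := by fun_prop
      have hζs : ζ s = γ s := by simp [hζ]
      have hder : HasDerivAt (fun z => Φ (ζ z)) (ℓ (q - q')) s := by
        have hl : HasDerivAt (fun z : ℝ => (γ s).2.2 + (z - s) • (q - q')) (q - q') s := by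
          simpa using (((hasDerivAt_id s).sub_const s).smul_const (q - q')).const_add (γ s).2.2
        have hd' : HasFDerivAt (fun q'' => Φ ((γ s).1, (γ s).2.1, q'')) ℓ
            ((γ s).2.2 + (s - s) • (q - q')) := by simpa using hdℓ
        exact hd'.comp_hasDerivAt s hl
      have hsl := (hasDerivWithinAt_iff_tendsto_slope' (s := Ioi s) (by simp)).1
        hder.hasDerivWithinAt
      have hlt : c + (L * |v - v'| + L * ‖p - p'‖) - (r + c) < ℓ (q - q') := by
        have : c + (L * |v - v'| + L * ‖p - p'‖) = m := by rw [hc]; ring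
        linarith
      have e1 := hsl.eventually (lt_mem_nhds hlt)
      have e2 : ∀ᶠ z in 𝓝[>] s, γ z ∈ 𝓑 :=
        nhdsWithin_le_nhds (hγc.continuousAt.eventually (hO.mem_nhds hs'))
      have e3 : ∀ᶠ z in 𝓝[>] s, ζ z ∈ 𝓑 :=
        nhdsWithin_le_nhds (hζc.continuousAt.eventually (hO.mem_nhds (by rw [hζs]; exact hs')))
      filter_upwards [e1, e2, e3, self_mem_nhdsWithin] with z a1 a2 a3 a4
      have a4' : 0 < z - s := sub_pos.2 a4
      rw [slope_def_field, lt_div_iff₀ a4', hζs] at a1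
      rw [slope_def_field, div_lt_iff₀ a4']
      have hL2 := hlip _ a2 _ a3
      have hdiff : γ z - ζ z = ((z - s) * (v - v'), (z - s) • (p - p'), 0) := by
        refine Prod.ext ?_ (Prod.ext ?_ ?_)
        · simp [hγ, hζ]; ring
        · simp only [hγ, hζ, Prod.snd_sub, Prod.fst_sub]; module
        · simp only [hγ, hζ, Prod.snd_sub]; module
      have hnorm : ‖γ z - ζ z‖ ≤ (z - s) * (|v - v'| + ‖p - p'‖) := by
        rw [hdiff]
        simp only [Prod.norm_def, norm_zero, norm_mul, norm_smul, Real.norm_eq_abs,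
          abs_of_pos a4']
        refine max_le ?_ (max_le ?_ (by positivity))
        · gcongr; linarith [norm_nonneg (p - p')]
        · gcongr; linarith [abs_nonneg (v - v')]
      have h3 := (abs_le.1 hL2).1
      have h4 := mul_le_mul_of_nonneg_left hnorm hL
      nlinarith
  have : -Φ (v, p, q) ≤ -Φ (v', p', q') - c :=
    le_of_forall_pos_le_add fun ε hε => main ε hε
  linarith

/-! ### Reflections -/

/-- The reflection `reflHyp e` as a continuous linear map. -/
def reflL (e : EN N) : EN N →L[ℝ] EN N := ContinuousLinearMap.id ℝ (EN N) - (2:ℝ) • rk1 e e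

lemma reflL_apply (e x : EN N) : reflL e x = reflHyp e x := by
  simp [reflL, reflHyp, rk1, smul_smul, real_inner_comm]

lemma reflHyp_continuous (e : EN N) : Continuous (reflHyp e) := by
  have : reflHyp e = reflL e := by ext1 x; rw [reflL_apply]
  rw [this]; exact (reflL e).continuous

lemma reflHyp_inner (e a b : EN N) : ⟪reflHyp e a, b⟫ = ⟪a, reflHyp e b⟫ := by
  simp only [reflHyp, inner_sub_left, inner_sub_right, inner_smul_left, inner_smul_right]
  simp [real_inner_comm]
  ring

lemma reflHyp_reflHyp {e : EN N} (he : ‖e‖ = 1) (x : EN N) : reflHyp e (reflHyp e x) = x := by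
  have h1 : ⟪reflHyp e x, e⟫ = -⟪x, e⟫ := by
    simp [reflHyp, inner_sub_left, inner_smul_left, he]; ring
  rw [reflHyp, h1, reflHyp]
  module

lemma reflHyp_eq_self {e x : EN N} (h : ⟪x, e⟫ = 0) : reflHyp e x = x := by
  simp [reflHyp, h]

lemma reflHyp_apply (e x : EN N) (j : Fin N) : reflHyp e x j = ∑ l, reflMat e j l * x l := by
  simp only [reflMat, sub_mul, Finset.sum_sub_distrib, ite_mul, one_mul, zero_mul,
    Finset.sum_ite_eq, Finset.mem_univ, if_true]
  simp only [reflHyp, PiLp.sub_apply, PiLp.smul_apply, smul_eq_mul, PiLp.inner_apply]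
  rw [Finset.mul_sum, Finset.sum_mul]
  congr 1
  refine Finset.sum_congr rfl fun l _ => ?_
  simp
  ring

lemma Jet2.refl {f : EN N → ℝ} {e x v : EN N} {Q : EN N →L[ℝ] EN N}
    (hf : Jet2 f (reflHyp e x) v Q) :
    Jet2 (fun y => f (reflHyp e y)) x (reflHyp e v) ((reflL e).comp (Q.comp (reflL e))) := by
  obtain ⟨G, h1, h2, h3⟩ := hf
  have hd : ∀ y, HasFDerivAt (reflHyp e) (reflL e) y := fun y => by
    have : reflHyp e = reflL e := by ext1 x; rw [reflL_apply]
    rw [this]; exact (reflL e).hasFDerivAt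
  refine ⟨fun y => reflL e (G (reflHyp e y)), ?_, by simp only [h2, reflL_apply], ?_⟩
  · filter_upwards [(reflHyp_continuous e).continuousAt.eventually h1] with y hy
    refine (hy.comp y (hd y)).congr_fderiv ?_
    ext w
    simp [reflL_apply, reflHyp_inner]
  · exact (reflL e).hasFDerivAt.comp x (h3.comp x (hd x))

lemma qmat_refl (e : EN N) (Q : EN N →L[ℝ] EN N) :
    qmat ((reflL e).comp (Q.comp (reflL e))) = matConj (reflMat e) (qmat Q) := by
  ext i j
  have hi : reflHyp e (EuclideanSpace.single i 1)
      = ∑ k, reflMat e i k • EuclideanSpace.single k (1:ℝ) := by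
    ext l
    rw [reflHyp_apply]
    simp [reflMat, Finset.sum_apply, Pi.single_apply, eq_comm]
    ring
  have hs : ∀ l, reflMat e j l = reflMat e l j := fun l => by
    simp [reflMat, eq_comm]; ring
  have h1 : qmat ((reflL e).comp (Q.comp (reflL e))) i j
      = ∑ l, reflMat e j l * Q (reflHyp e (EuclideanSpace.single i 1)) l := by
    simp only [qmat, ContinuousLinearMap.comp_apply, reflL_apply]
    rw [reflHyp_apply]
  rw [h1, hi, matConj, Finset.sum_comm]
  refine Finset.sum_congr rfl fun l _ => ?_
  simp only [map_sum, map_smul, WithLp.ofLp_sum, WithLp.ofLp_smul, Finset.sum_apply,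
    Pi.smul_apply, smul_eq_mul]
  rw [Finset.mul_sum, hs l]
  refine Finset.sum_congr rfl fun k _ => ?_
  simp only [qmat]
  ring

/-- `gradVec` as a continuous linear map. -/
def gradL (N : ℕ) : (EN N →L[ℝ] ℝ) →L[ℝ] EN N :=
  ((EuclideanSpace.equiv (Fin N) ℝ).symm : (Fin N → ℝ) →L[ℝ] EN N).comp
    (ContinuousLinearMap.pi fun i => ContinuousLinearMap.apply ℝ ℝ (EuclideanSpace.single i 1))

lemma gradL_apply (D : EN N →L[ℝ] ℝ) : gradL N D = gradVec D := rfl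

lemma innerSL_gradVec (D : EN N →L[ℝ] ℝ) : innerSL ℝ (gradVec D) = D := by
  ext a
  have ha : a = ∑ i, a i • EuclideanSpace.single i (1:ℝ) := by
    ext j; simp [Finset.sum_apply, Pi.single_apply]
  conv_rhs => rw [ha]
  simp [PiLp.inner_apply, gradVec]

lemma jet2_of_fderiv {f : EN N → ℝ} {D : EN N → (EN N →L[ℝ] ℝ)} {x : EN N}
    {D2 : EN N →L[ℝ] EN N →L[ℝ] ℝ} (h1 : ∀ᶠ y in 𝓝 x, HasFDerivAt f (D y) y)
    (h2 : HasFDerivAt D D2 x) : Jet2 f x (gradVec (D x)) ((gradL N).comp D2) := by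
  refine ⟨fun y => gradL N (D y), ?_, rfl, (gradL N).hasFDerivAt.comp x h2⟩
  filter_upwards [h1] with y hy
  rw [gradL_apply, innerSL_gradVec]; exact hy

lemma qmat_gradL (D2 : EN N →L[ℝ] EN N →L[ℝ] ℝ) : qmat ((gradL N).comp D2) = hessMat D2 := by
  ext i j
  simp [qmat, hessMat, gradL_apply, gradVec]

/-- The reflection difference `u - u ∘ σ_e` of a solution is a supersolution for the class of
linear equations determined by the ellipticity and Lipschitz constants of `F`. -/
lemma superAt_diff {B : Set (EN N)} (hBo : IsOpen B)
    {𝓑 : Set (ℝ × EN N × (Fin N → Fin N → ℝ))} (hO : IsOpen 𝓑) (hC : Convex ℝ 𝓑)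
    {F : ℝ → EN N → (ℝ × EN N × (Fin N → Fin N → ℝ)) → ℝ} {e : EN N} (he : ‖e‖ = 1)
    (hF1dom : ∀ x ∈ B, ∀ v : ℝ, ∀ p : EN N, ∀ q : Fin N → Fin N → ℝ, (v, p, q) ∈ 𝓑 →
      reflHyp e x ∈ B ∧ (v, reflHyp e p, matConj (reflMat e) q) ∈ 𝓑)
    (hF1sym : ∀ t ∈ Ioi (0:ℝ), ∀ x ∈ B,
      ∀ v : ℝ, ∀ p : EN N, ∀ q : Fin N → Fin N → ℝ, (v, p, q) ∈ 𝓑 →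
      F t (reflHyp e x) (v, reflHyp e p, matConj (reflMat e) q) = F t x (v, p, q))
    {L : ℝ} (hL : 0 ≤ L) (hF_lip : ∀ t ∈ Ici (0:ℝ), ∀ x ∈ B, ∀ P ∈ 𝓑, ∀ P' ∈ 𝓑,
      |F t x P - F t x P'| ≤ L * ‖P - P'‖)
    {Fq : ℝ → EN N → (ℝ × EN N × (Fin N → Fin N → ℝ)) → ((Fin N → Fin N → ℝ) →L[ℝ] ℝ)}
    (hFq : ∀ t ∈ Ici (0:ℝ), ∀ x ∈ B,
      ∀ v : ℝ, ∀ p : EN N, ∀ q : Fin N → Fin N → ℝ, (v, p, q) ∈ 𝓑 →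
      HasFDerivAt (fun q' => F t x (v, p, q')) (Fq t x (v, p, q)) q)
    {α₀ : ℝ} (hF4 : ∀ t ∈ Ici (0:ℝ), ∀ x ∈ B, ∀ P ∈ 𝓑, ∀ ξ : Fin N → ℝ,
      α₀ * (∑ i, ξ i ^ 2) ≤ Fq t x P (fun i j => ξ i * ξ j))
    {u ut : EN N → ℝ → ℝ} {Du : EN N → ℝ → (EN N →L[ℝ] ℝ)}
    {D2u : EN N → ℝ → (EN N →L[ℝ] EN N →L[ℝ] ℝ)}
    (hut : ∀ x ∈ B, ∀ t ∈ Ioi (0:ℝ), HasDerivAt (fun s => u x s) (ut x t) t)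
    (hDu : ∀ x ∈ B, ∀ t ∈ Ioi (0:ℝ), HasFDerivAt (fun y => u y t) (Du x t) x)
    (hD2u : ∀ x ∈ B, ∀ t ∈ Ioi (0:ℝ), HasFDerivAt (fun y => Du y t) (D2u x t) x)
    (hdom : ∀ x ∈ B, ∀ t ∈ Ioi (0:ℝ), (u x t, gradVec (Du x t), hessMat (D2u x t)) ∈ 𝓑)
    (hPDE : ∀ x ∈ B, ∀ t ∈ Ioi (0:ℝ),
      ut x t = F t x (u x t, gradVec (Du x t), hessMat (D2u x t)))
    {x : EN N} (hx : x ∈ B) {t : ℝ} (ht : 0 < t) :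
    SuperAt α₀ L (fun x t => u x t - u (reflHyp e x) t) x t := by
  have hP := hdom x hx t ht
  have hσx : reflHyp e x ∈ B := (hF1dom x hx _ _ _ hP).1
  have hPσ := hdom _ hσx t ht
  have hP' := (hF1dom _ hσx _ _ _ hPσ).2
  have hjet : ∀ y ∈ B, Jet2 (fun y => u y t) y (gradVec (Du y t)) ((gradL N).comp (D2u y t)) :=
    fun y hy => jet2_of_fderiv (D := fun y => Du y t)
      (by filter_upwards [hBo.mem_nhds hy] with z hz using hDu z hz t ht) (hD2u y hy t ht)
  refine ⟨_, _, _, (hut x hx t ht).sub (hut _ hσx t ht), (hjet x hx).sub (hjet _ hσx).refl, ?_⟩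
  intro m hm
  rw [qmat_sub, qmat_refl, qmat_gradL, qmat_gradL] at hm
  have h := meanval hO hC hL (hF_lip t ht.le x hx) (hFq t ht.le x hx) (hF4 t ht.le x hx)
    hP hP' hm
  have hs := hF1sym t ht _ hσx _ _ _ hPσ
  rw [reflHyp_reflHyp he] at hs
  rw [hPDE x hx t ht, hPDE _ hσx t ht, ← hs]
  exact h

/-! ### Power barriers and propagation of positivity -/

/-- The truncated power `y ↦ (y₊)ᵏ`. -/
def posPow (k : ℕ) (y : ℝ) : ℝ := (max y 0) ^ k

lemma posPow_nonneg (k : ℕ) (y : ℝ) : 0 ≤ posPow k y := by unfold posPow; positivity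

lemma posPow_of_nonpos {k : ℕ} (hk : k ≠ 0) {y : ℝ} (hy : y ≤ 0) : posPow k y = 0 := by
  simp [posPow, max_eq_right hy, hk]

lemma posPow_of_nonneg (k : ℕ) {y : ℝ} (hy : 0 ≤ y) : posPow k y = y ^ k := by
  simp [posPow, max_eq_left hy]

lemma posPow_le {k : ℕ} {y c : ℝ} (hc : 0 ≤ c) (h : y ≤ c) : posPow k y ≤ c ^ k := by
  unfold posPow
  exact pow_le_pow_left₀ (le_max_right _ _) (max_le h hc) k

lemma continuous_posPow (k : ℕ) : Continuous (posPow k) := by unfold posPow; fun_prop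

lemma hasDerivAt_posPow (k : ℕ) (y : ℝ) :
    HasDerivAt (posPow (k + 2)) ((k + 2) * posPow (k + 1) y) y := by
  rcases lt_trichotomy y 0 with h | h | h
  · rw [posPow_of_nonpos (by omega) h.le, mul_zero]
    refine (hasDerivAt_const y (0:ℝ)).congr_of_eventuallyEq ?_
    filter_upwards [Iio_mem_nhds h] with z hz
    exact posPow_of_nonpos (by omega) (le_of_lt hz)
  · subst h
    rw [posPow_of_nonpos (by omega) le_rfl, mul_zero, ← hasDerivWithinAt_univ, ← Iic_union_Ici]
    refine HasDerivWithinAt.union ?_ ?_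
    · refine (hasDerivWithinAt_const (0:ℝ) _ (0:ℝ)).congr (fun z hz => ?_) ?_
      · exact posPow_of_nonpos (by omega) hz
      · exact posPow_of_nonpos (by omega) le_rfl
    · have := (hasDerivAt_pow (k + 2) (0:ℝ)).hasDerivWithinAt (s := Ici 0)
      simp only [Nat.add_succ_sub_one, ne_eq, Nat.add_eq_zero_iff, one_ne_zero, and_false,
        not_false_eq_true, zero_pow, mul_zero] at this
      refine this.congr (fun z hz => ?_) ?_
      · exact posPow_of_nonneg _ hz
      · exact posPow_of_nonneg _ le_rfl
  · rw [posPow_of_nonneg _ h.le]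
    have := hasDerivAt_pow (k + 2) y
    refine HasDerivAt.congr_of_eventuallyEq (by simpa using this) ?_
    filter_upwards [Ioi_mem_nhds h] with z hz
    exact posPow_of_nonneg _ (le_of_lt hz)

/-- Gradient and Hessian of a truncated power of a function. -/
lemma Jet2.posPow {f : EN N → ℝ} {x v : EN N} {Q : EN N →L[ℝ] EN N} (hf : Jet2 f x v Q) (k : ℕ) :
    Jet2 (fun y => posPow (k + 3) (f y)) x (((k + 3) * posPow (k + 2) (f x)) • v)
      (((k + 3) * _root_.posPow (k + 2) (f x)) • Q +
        ((k + 3) * ((k + 2) * _root_.posPow (k + 1) (f x))) • rk1 v v) := by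
  have h := hf.comp (h := _root_.posPow (k + 3))
    (h' := fun y => (k + 3) * _root_.posPow (k + 2) y)
    (h'' := (k + 3) * ((k + 2) * _root_.posPow (k + 1) (f x)))
    (fun y => by
      have := hasDerivAt_posPow (k + 1) y
      push_cast at this
      convert this using 1
      ring) ((hasDerivAt_posPow k (f x)).const_mul _)
  exact h

lemma ell_rk1 {α L : ℝ} {ℓ : (Fin N → Fin N → ℝ) →L[ℝ] ℝ} (hℓ : ℓ ∈ EllClass N α L) (v : EN N) :
    α * ‖v‖ ^ 2 ≤ ℓ (qmat (rk1 v v)) := by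
  rw [qmat_rk1, EuclideanSpace.norm_sq_eq]
  simpa using hℓ.1 (fun i => v i)

lemma ell_bound {α L : ℝ} (hL : 0 ≤ L) {ℓ : (Fin N → Fin N → ℝ) →L[ℝ] ℝ}
    (hℓ : ℓ ∈ EllClass N α L) (Q : EN N →L[ℝ] EN N) :
    -(L * ‖Q‖) ≤ ℓ (qmat Q) := by
  have h1 := (abs_le.1 (hℓ.2 (qmat Q))).1
  have h2 := mul_le_mul_of_nonneg_left (norm_qmat_le Q) hL
  linarith

/-- A truncated power `y₊ᵏ⁺³` is a subsolution up to a multiple of itself as soon as the gradient of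
`y` is not too small compared with `y` itself. The constant `ct` accounts for a time derivative
of `y`. -/
lemma power_barrier {α L : ℝ} (hL : 0 ≤ L) {ℓ : (Fin N → Fin N → ℝ) →L[ℝ] ℝ}
    (hℓ : ℓ ∈ EllClass N α L) (k : ℕ) {y C K ct : ℝ} {v : EN N} {Q : EN N →L[ℝ] EN N}
    (hC : 0 < y → L * ‖Q‖ + L * ‖v‖ + ct ≤ C)
    (hy : 0 < y → C * y ≤ (k + 2) * (α * ‖v‖ ^ 2) + K * y ^ 2) :
    -((k + 3) * K * posPow (k + 3) y) ≤
      ℓ (qmat (((k + 3) * posPow (k + 2) y) • Q +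
        ((k + 3) * ((k + 2) * posPow (k + 1) y)) • rk1 v v))
      - L * ‖((k + 3) * posPow (k + 2) y) • v‖ - ((k + 3) * posPow (k + 2) y) * ct := by
  rw [qmat_add, qmat_smul, qmat_smul, map_add, map_smul, map_smul, norm_smul]
  rcases le_or_gt y 0 with h | h
  · simp [posPow_of_nonpos, h]
  · have hC := hC h
    have hy := hy h
    rw [posPow_of_nonneg _ h.le, posPow_of_nonneg _ h.le, posPow_of_nonneg _ h.le]
    have h1 := ell_rk1 hℓ v
    have h2 := ell_bound hL hℓ Q
    have hn : ‖((k:ℝ) + 3) * y ^ (k + 2)‖ = (k + 3) * y ^ (k + 2) := by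
      rw [Real.norm_eq_abs, abs_of_pos (by positivity)]
    rw [hn]
    simp only [smul_eq_mul]
    have h3 : (0:ℝ) ≤ (k + 3) * y ^ (k + 2) := by positivity
    have h4 : (0:ℝ) ≤ (k + 3) * ((k + 2) * y ^ (k + 1)) := by positivity
    have h5 := mul_le_mul_of_nonneg_left h2 h3
    have h6 := mul_le_mul_of_nonneg_left h1 h4
    have h7 := mul_le_mul_of_nonneg_left hC h3
    have h8 : (0:ℝ) ≤ (k + 3) * y ^ (k + 1) := by positivity
    have h9 := mul_le_mul_of_nonneg_left hy h8
    have e1 : ((k:ℝ) + 3) * y ^ (k + 1) * (C * y) = (k + 3) * y ^ (k + 2) * C := by ring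
    have e2 : ((k:ℝ) + 3) * y ^ (k + 1) * ((k + 2) * (α * ‖v‖ ^ 2) + K * y ^ 2)
      = (k + 3) * ((k + 2) * y ^ (k + 1)) * (α * ‖v‖ ^ 2) + (k + 3) * K * y ^ (k + 3) := by ring
    rw [e1, e2] at h9
    nlinarith

/-- Quantitative strong maximum principle: positivity of a nonnegative supersolution propagates
from `(x₀, t₁)` to `(y, T)`. The barrier is a bump carried from `x₀` to `y` at constant speed. -/
lemma propagate {α L : ℝ} (hα : 0 < α) (hL : 0 ≤ L) {K D : Set (EN N)} (hK : IsCompact K)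
    (hD : IsOpen D) (hDK : D ⊆ K) {w : EN N → ℝ → ℝ} {t1 T : ℝ} (hT : t1 < T)
    (hw : ContinuousOn (fun p : EN N × ℝ => w p.1 p.2) (K ×ˢ Icc t1 T))
    (hnn : ∀ x ∈ K, ∀ t ∈ Icc t1 T, 0 ≤ w x t)
    (hsup : ∀ x ∈ D, ∀ t, t1 < t → t ≤ T → SuperAt α L w x t)
    {x₀ y : EN N} {d : ℝ} (hball : ball x₀ (2 * d) ⊆ D) (hy : ‖y - x₀‖ < d)
    (hpos : 0 < w x₀ t1) : 0 < w y T := by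
  have hd : 0 < d := (norm_nonneg _).trans_lt hy
  have hx₀ : x₀ ∈ D := hball (mem_ball_self (by linarith))
  have hyD : y ∈ D := hball (by rw [mem_ball, dist_eq_norm]; linarith)
  obtain ⟨η, hη, hη2⟩ : ∃ η > 0, η < w x₀ t1 := ⟨w x₀ t1 / 2, by linarith, by linarith⟩
  -- a small ball on which the initial values are at least `η`
  obtain ⟨ρ, hρ, hρd, hρw⟩ : ∃ ρ > 0, ρ ≤ d ∧ ∀ x ∈ ball x₀ ρ, η ≤ w x t1 := by
    have hc : ContinuousAt (fun x => w x t1) x₀ := by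
      have h1 : ContinuousOn (fun x => w x t1) K :=
        hw.comp (f := fun x => (x, t1)) (by fun_prop) fun x hx => ⟨hx, left_mem_Icc.2 hT.le⟩
      exact h1.continuousAt (mem_of_superset (hD.mem_nhds hx₀) hDK)
    obtain ⟨ρ, hρ, h⟩ := Metric.eventually_nhds_iff_ball.1 (hc.eventually (lt_mem_nhds hη2))
    exact ⟨min ρ d, lt_min hρ hd, min_le_right _ _,
      fun x hx => (h x (ball_subset_ball (min_le_left _ _) hx)).le⟩
  set V : EN N := (1 / (T - t1)) • (y - x₀) with hV
  set c : ℝ → EN N := fun t => x₀ + (t - t1) • V with hc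
  have hcT : c T = y := by
    simp only [hc, hV, smul_smul]
    rw [mul_one_div_cancel (by linarith), one_smul]; abel
  have hcball : ∀ t ∈ Icc t1 T, ball (c t) ρ ⊆ D := by
    intro t ht x hx
    refine hball ?_
    rw [mem_ball, dist_eq_norm] at *
    have h1 : ‖c t - x₀‖ ≤ ‖y - x₀‖ := by
      simp only [hc, hV, add_sub_cancel_left, smul_smul, norm_smul]
      refine mul_le_of_le_one_left (norm_nonneg _) ?_
      rw [mul_one_div, Real.norm_eq_abs, abs_of_nonneg
        (div_nonneg (by linarith [ht.1]) (by linarith)), div_le_one (by linarith)]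
      linarith [ht.2]
    calc ‖x - x₀‖ = ‖(x - c t) + (c t - x₀)‖ := by congr 1; abel
      _ ≤ ‖x - c t‖ + ‖c t - x₀‖ := norm_add_le _ _
      _ < 2 * d := by linarith
  set C' := L * 2 + L * (2 * ρ) + 2 * ρ * ‖V‖ with hC'
  set K' := (C' + 8 * α) ^ 2 / (32 * α * ρ ^ 2) with hK'
  set κ := 3 * K' + L with hκ
  set A := η / ρ ^ 6 with hA
  have hApos : 0 < A := by positivity
  set Y : EN N → ℝ → ℝ := fun x t => ρ ^ 2 - ‖x - c t‖ ^ 2 with hY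
  set ψ : EN N → ℝ → ℝ := fun x t => A * Real.exp (-κ * (t - t1)) * posPow 3 (Y x t) with hψ
  have hψout : ∀ x t, x ∉ ball (c t) ρ → ψ x t = 0 := by
    intro x t hx
    simp only [hψ]
    rw [posPow_of_nonpos (by norm_num), mul_zero]
    rw [mem_ball, dist_eq_norm, not_lt] at hx
    simp only [hY]
    nlinarith
  have hcc : Continuous c := by fun_prop
  have hcmp : ψ y T ≤ w y T := by
    refine comparison hα.le hL hK hD hDK hw ?_ ?_ ?_ hsup ?_ y (hDK hyD) T (right_mem_Icc.2 hT.le)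
    · have := continuous_posPow 3
      exact Continuous.continuousOn (by fun_prop)
    · intro x hx
      by_cases hxb : x ∈ ball (c t1) ρ
      · have hxb' : x ∈ ball x₀ ρ := by simpa [hc] using hxb
        refine le_trans ?_ (hρw x hxb')
        simp only [hψ, sub_self, mul_zero, Real.exp_zero, mul_one]
        calc A * posPow 3 (Y x t1) ≤ A * (ρ ^ 2) ^ 3 := by
              gcongr
              exact posPow_le (by positivity) (by simp only [hY]; linarith [sq_nonneg ‖x - c t1‖])
          _ = η := by rw [hA]; field_simp
      · rw [hψout x t1 hxb]; exact hnn x hx t1 (left_mem_Icc.2 hT.le)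
    · intro x hx hxD t h1 h2
      rw [hψout x t fun h => hxD (hcball t ⟨h1.le, h2⟩ h)]
      exact hnn x hx t ⟨h1.le, h2⟩
    · intro x hx t h1 h2
      have hjY : Jet2 (fun z => Y z t) x ((-1:ℝ) • ((2:ℝ) • (x - c t)))
          ((-1:ℝ) • ((2:ℝ) • ContinuousLinearMap.id ℝ (EN N))) := by
        have := ((Jet2.normSq (c t) x).const_mul (-1)).add (Jet2.const (ρ ^ 2) x)
        rw [add_zero, add_zero] at this
        convert this using 2
        ring
      have hj := (hjY.posPow 0).const_mul (A * Real.exp (-κ * (t - t1)))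
      have hYt : HasDerivAt (fun s => Y x s) (2 * ⟪x - c t, V⟫) t := by
        have hct : HasDerivAt (fun s => x - c s) (-V) t := by
          have := (((hasDerivAt_id t).sub_const t1).smul_const V).const_add x₀
          simpa [hc] using this.const_sub x
        have := hct.norm_sq.const_sub (ρ ^ 2)
        refine this.congr_deriv ?_
        simp
      have hEt : HasDerivAt (fun s => A * Real.exp (-κ * (s - t1)))
          (A * (Real.exp (-κ * (t - t1)) * -κ)) t := by
        have := (((hasDerivAt_id t).sub_const t1).const_mul (-κ)).exp.const_mul A
        simpa using this
      have hHt : HasDerivAt (fun s => posPow 3 (Y x s))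
          ((3 * posPow 2 (Y x t)) * (2 * ⟪x - c t, V⟫)) t := by
        have h3 := hasDerivAt_posPow 1 (Y x t)
        have := h3.comp t hYt
        refine this.congr_deriv ?_
        norm_num
      refine ⟨_, _, _, hEt.mul hHt, hj, ?_⟩
      intro ℓ hℓ
      have hE : 0 < A * Real.exp (-κ * (t - t1)) := by positivity
      set E := A * Real.exp (-κ * (t - t1)) with hEdef
      have hvn : ‖(-1:ℝ) • ((2:ℝ) • (x - c t))‖ = 2 * ‖x - c t‖ := by
        simp [norm_smul]
      have hQn : ‖(-1:ℝ) • ((2:ℝ) • ContinuousLinearMap.id ℝ (EN N))‖ ≤ 2 := by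
        rw [norm_smul, norm_smul]
        have := ContinuousLinearMap.norm_id_le (𝕜 := ℝ) (E := EN N)
        norm_num
        linarith
      have hpb := power_barrier (ct := 2 * ρ * ‖V‖) hL hℓ 0 (y := Y x t) (C := C') (K := K')
        (v := (-1:ℝ) • ((2:ℝ) • (x - c t)))
        (Q := (-1:ℝ) • ((2:ℝ) • ContinuousLinearMap.id ℝ (EN N))) ?_ ?_
      · have hinner : (3 * posPow 2 (Y x t)) * (2 * ⟪x - c t, V⟫)
            ≤ (3 * posPow 2 (Y x t)) * (2 * ρ * ‖V‖) := by
          rcases le_or_gt (Y x t) 0 with h | h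
          · simp [posPow_of_nonpos, h]
          · have hlt : ‖x - c t‖ ≤ ρ := by
              simp only [hY] at h
              exact (abs_le_of_sq_le_sq' (by linarith) hρ.le).2
            have := real_inner_le_norm (x - c t) V
            have h4 := mul_le_mul_of_nonneg_right hlt (norm_nonneg V)
            refine mul_le_mul_of_nonneg_left (by linarith) ?_
            have := posPow_nonneg 2 (Y x t)
            positivity
        rw [qmat_smul, map_smul, norm_smul, Real.norm_eq_abs, abs_of_pos hE]
        have hψabs : |ψ x t| = E * posPow 3 (Y x t) := by
          simp only [hψ]
          exact abs_of_nonneg (mul_nonneg hE.le (posPow_nonneg _ _))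
        rw [hψabs, smul_eq_mul]
        simp only [Nat.cast_zero, zero_add] at hpb ⊢
        have h5 := mul_le_mul_of_nonneg_left hpb hE.le
        have h6 := mul_le_mul_of_nonneg_left hinner hE.le
        have e1 : A * (Real.exp (-κ * (t - t1)) * -κ) = -(E * κ) := by rw [hEdef]; ring
        rw [e1, hκ]
        nlinarith
      · intro h
        rw [hvn]
        have hlt : ‖x - c t‖ ≤ ρ := by
          simp only [hY] at h
          exact (abs_le_of_sq_le_sq' (by linarith) hρ.le).2
        rw [hC']
        gcongr
      · intro h
        rw [hvn]
        have e : ‖x - c t‖ ^ 2 = ρ ^ 2 - Y x t := by simp only [hY]; ring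
        rw [mul_pow, e]
        -- AM-GM
        have hkk : (C' + 8 * α) * Y x t ≤ 8 * α * ρ ^ 2 + K' * Y x t ^ 2 := by
          rw [hK', div_mul_eq_mul_div]
          have hp : 0 < 32 * α * ρ ^ 2 := by positivity
          rw [← sub_nonneg]
          have : 8 * α * ρ ^ 2 + (C' + 8 * α) ^ 2 * Y x t ^ 2 / (32 * α * ρ ^ 2)
              - (C' + 8 * α) * Y x t
              = ((C' + 8 * α) * Y x t - 16 * α * ρ ^ 2) ^ 2 / (32 * α * ρ ^ 2) := by
            field_simp
            ring
          rw [this]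
          positivity
        norm_num
        linarith
  refine lt_of_lt_of_le ?_ hcmp
  simp only [hψ, hY, hcT, sub_self, norm_zero]
  have e0 : ρ ^ 2 - (0:ℝ) ^ 2 = ρ ^ 2 := by ring
  rw [e0, posPow_of_nonneg _ (by positivity)]
  positivity

/-! ### Radial domains and strict positivity on the half domain -/

lemma reflHyp_norm {e : EN N} (he : ‖e‖ = 1) (x : EN N) : ‖reflHyp e x‖ = ‖x‖ := by
  have h : ‖reflHyp e x‖ ^ 2 = ‖x‖ ^ 2 := by
    unfold reflHyp
    rw [norm_sub_sq_real, inner_smul_right, norm_smul, he, mul_one, Real.norm_eq_abs, sq_abs]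
    ring
  exact (sq_eq_sq₀ (norm_nonneg _) (norm_nonneg _)).1 h

lemma IsRadialDomain.isOpen {B : Set (EN N)} (hB : IsRadialDomain B) : IsOpen B := by
  rcases hB with ⟨R, _, rfl⟩ | ⟨r, R, _, _, rfl⟩
  · exact isOpen_ball
  · exact (isOpen_lt continuous_const continuous_norm).inter
      (isOpen_lt continuous_norm continuous_const)

lemma IsRadialDomain.isCompact_closure {B : Set (EN N)} (hB : IsRadialDomain B) :
    IsCompact (closure B) := by
  refine Bornology.IsBounded.isCompact_closure ?_
  rcases hB with ⟨R, _, rfl⟩ | ⟨r, R, _, _, rfl⟩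
  · exact isBounded_ball
  · exact (isBounded_ball (x := (0 : EN N)) (r := R)).subset fun x hx => by
      simpa using hx.2

lemma IsRadialDomain.reflHyp_mem {B : Set (EN N)} (hB : IsRadialDomain B) {e : EN N}
    (he : ‖e‖ = 1) {x : EN N} (hx : x ∈ B) : reflHyp e x ∈ B := by
  rcases hB with ⟨R, _, rfl⟩ | ⟨r, R, _, _, rfl⟩
  · simpa [reflHyp_norm he] using hx
  · simpa [reflHyp_norm he] using hx

lemma IsRadialDomain.reflHyp_mem_closure {B : Set (EN N)} (hB : IsRadialDomain B) {e : EN N}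
    (he : ‖e‖ = 1) {x : EN N} (hx : x ∈ closure B) : reflHyp e x ∈ closure B :=
  map_mem_closure (reflHyp_continuous e) hx fun _ h => hB.reflHyp_mem he h

lemma IsRadialDomain.reflHyp_mem_frontier {B : Set (EN N)} (hB : IsRadialDomain B) {e : EN N}
    (he : ‖e‖ = 1) {x : EN N} (hx : x ∈ frontier B) : reflHyp e x ∈ frontier B := by
  rw [hB.isOpen.frontier_eq] at hx ⊢
  refine ⟨hB.reflHyp_mem_closure he hx.1, fun h => hx.2 ?_⟩
  simpa [reflHyp_reflHyp he] using hB.reflHyp_mem he h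

/-- The half domain of an annulus is the image of a convex set under polar coordinates. -/
lemma IsRadialDomain.isPreconnected_halfDom {B : Set (EN N)} (hB : IsRadialDomain B) (e : EN N) :
    IsPreconnected (halfDom B e) := by
  have hhalf : Convex ℝ {x : EN N | 0 < ⟪x, e⟫} := by
    have : {x : EN N | 0 < ⟪x, e⟫} = (innerSL ℝ e : EN N →L[ℝ] ℝ) ⁻¹' Ioi 0 := by
      ext x; simp [real_inner_comm]
    rw [this]
    exact (convex_Ioi 0).linear_preimage (innerSL ℝ e : EN N →L[ℝ] ℝ).toLinearMap
  rcases hB with ⟨R, _, rfl⟩ | ⟨r, R, hr, _, rfl⟩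
  · exact ((convex_ball 0 R).inter hhalf).isPreconnected
  · have hc : IsPreconnected (Ioo r R ×ˢ {x : EN N | 0 < ⟪x, e⟫}) :=
      ((convex_Ioo r R).prod hhalf).isPreconnected
    have hne : ∀ v : EN N, 0 < ⟪v, e⟫ → 0 < ‖v‖ := fun v hv => by
      rw [norm_pos_iff]; rintro rfl; simp at hv
    have himg : halfDom {x : EN N | r < ‖x‖ ∧ ‖x‖ < R} e
        = (fun p : ℝ × EN N => (p.1 / ‖p.2‖) • p.2) '' (Ioo r R ×ˢ {x : EN N | 0 < ⟪x, e⟫}) := by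
      ext x
      constructor
      · rintro ⟨⟨h1, h2⟩, h3⟩
        refine ⟨(‖x‖, x), ⟨⟨h1, h2⟩, h3⟩, ?_⟩
        simp [div_self (hne x h3).ne']
      · rintro ⟨⟨ρ, v⟩, ⟨⟨h1, h2⟩, h3⟩, rfl⟩
        simp only [mem_ofPred_eq] at h1 h2 h3
        have hv := hne v h3
        have hρ : 0 < ρ := hr.trans h1
        have hn : ‖(ρ / ‖v‖) • v‖ = ρ := by
          rw [norm_smul, Real.norm_eq_abs, abs_of_pos (by positivity)]
          field_simp
        refine ⟨⟨by simpa [hn] using h1, by simpa [hn] using h2⟩, ?_⟩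
        simp only [inner_smul_left]
        exact mul_pos (by simpa using div_pos hρ hv) h3
    rw [himg]
    refine hc.image _ ?_
    refine ContinuousOn.smul (ContinuousOn.div continuousOn_fst (by fun_prop) ?_) continuousOn_snd
    rintro ⟨ρ, v⟩ ⟨_, h⟩
    exact (hne v h).ne'

/-- The closed half of `B̄` on the positive side of `H(e)`. -/
def closedHalf (B : Set (EN N)) (e : EN N) : Set (EN N) := closure B ∩ {x | 0 ≤ ⟪x, e⟫}

/-- The difference `u - u ∘ σ_e`. -/
def reflDiff (u : EN N → ℝ → ℝ) (e : EN N) (x : EN N) (t : ℝ) : ℝ := u x t - u (reflHyp e x) t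

lemma isCompact_closedHalf {B : Set (EN N)} (hB : IsRadialDomain B) (e : EN N) :
    IsCompact (closedHalf B e) :=
  hB.isCompact_closure.inter_right (isClosed_le continuous_const (by fun_prop))

lemma isOpen_halfDom {B : Set (EN N)} (hB : IsRadialDomain B) (e : EN N) :
    IsOpen (halfDom B e) := by
  have h : IsOpen {x : EN N | 0 < ⟪x, e⟫} := isOpen_lt continuous_const (by fun_prop)
  exact hB.isOpen.inter h

lemma halfDom_subset_closedHalf (B : Set (EN N)) (e : EN N) : halfDom B e ⊆ closedHalf B e :=
  fun _ hx => ⟨subset_closure hx.1, le_of_lt hx.2⟩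

lemma closedHalf_diff {B : Set (EN N)} (hB : IsRadialDomain B) {e x : EN N}
    (hx : x ∈ closedHalf B e) (hxD : x ∉ halfDom B e) : x ∈ frontier B ∨ ⟪x, e⟫ = 0 := by
  rw [hB.isOpen.frontier_eq]
  by_cases h : x ∈ B
  · right
    by_contra h0
    exact hxD ⟨h, lt_of_le_of_ne hx.2 (Ne.symm h0)⟩
  · exact Or.inl ⟨hx.1, h⟩

lemma continuousOn_reflDiff {B : Set (EN N)} (hB : IsRadialDomain B) {u : EN N → ℝ → ℝ}
    (hu : ContinuousOn (fun p : EN N × ℝ => u p.1 p.2) (closure B ×ˢ Ici 0)) {e : EN N}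
    (he : ‖e‖ = 1) :
    ContinuousOn (fun p : EN N × ℝ => reflDiff u e p.1 p.2) (closure B ×ˢ Ici 0) := by
  refine hu.sub (hu.comp (f := fun p : EN N × ℝ => (reflHyp e p.1, p.2)) ?_ ?_)
  · have := reflHyp_continuous e
    fun_prop
  · rintro ⟨x, t⟩ ⟨hx, ht⟩
    exact ⟨hB.reflHyp_mem_closure he hx, ht⟩

lemma reflDiff_boundary {B : Set (EN N)} (hB : IsRadialDomain B) {u : EN N → ℝ → ℝ}
    (hbc : ∀ x ∈ frontier B, ∀ t ∈ Ioi (0:ℝ), u x t = 0) {e : EN N} (he : ‖e‖ = 1) {x : EN N}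
    (hx : x ∈ closedHalf B e) (hxD : x ∉ halfDom B e) {t : ℝ} (ht : 0 < t) :
    reflDiff u e x t = 0 := by
  unfold reflDiff
  rcases closedHalf_diff hB hx hxD with h | h
  · rw [hbc x h t ht, hbc _ (hB.reflHyp_mem_frontier he h) t ht, sub_zero]
  · rw [reflHyp_eq_self h, sub_self]

lemma reflDiff_nonneg {B : Set (EN N)} (hB : IsRadialDomain B) {u : EN N → ℝ → ℝ}
    (hu : ContinuousOn (fun p : EN N × ℝ => u p.1 p.2) (closure B ×ˢ Ici 0))
    (hbc : ∀ x ∈ frontier B, ∀ t ∈ Ioi (0:ℝ), u x t = 0) {e : EN N} (he : ‖e‖ = 1)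
    {α L : ℝ} (hα : 0 ≤ α) (hL : 0 ≤ L)
    (hsup : ∀ x ∈ B, ∀ t, 0 < t → SuperAt α L (reflDiff u e) x t)
    (h0 : ∀ x ∈ halfDom B e, 0 ≤ reflDiff u e x 0) :
    ∀ x ∈ closedHalf B e, ∀ t, 0 ≤ t → 0 ≤ reflDiff u e x t := by
  intro x hx t ht
  have hw := continuousOn_reflDiff hB hu he
  refine comparison (ψ := fun _ _ => 0) (t1 := 0) (T := t) hα hL (isCompact_closedHalf hB e)
    (isOpen_halfDom hB e) (halfDom_subset_closedHalf B e)
    (hw.mono (prod_mono inter_subset_left Icc_subset_Ici_self)) continuousOn_const ?_ ?_ ?_ ?_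
    x hx t ⟨ht, le_rfl⟩
  · intro y hy
    by_cases hyD : y ∈ halfDom B e
    · exact h0 y hyD
    · -- at the boundary the initial value is the limit of the values at positive times
      have hc : ContinuousOn (fun s => reflDiff u e y s) (Ici 0) :=
        hw.comp (f := fun s => (y, s)) (by fun_prop) fun s hs => ⟨hy.1, hs⟩
      have h1 : Tendsto (fun s => reflDiff u e y s) (𝓝[>] 0) (𝓝 (reflDiff u e y 0)) :=
        ((hc 0 self_mem_Ici).mono Ioi_subset_Ici_self).tendsto
      refine ge_of_tendsto h1 ?_
      filter_upwards [self_mem_nhdsWithin] with s hs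
      exact (reflDiff_boundary hB hbc he hy hyD hs).ge
  · intro y hy hyD s hs _
    exact (reflDiff_boundary hB hbc he hy hyD hs).ge
  · intro y hy s hs _
    exact hsup y hy.1 s hs
  · intro y hy s hs _
    exact ⟨0, 0, 0, hasDerivAt_const _ _, Jet2.const 0 y, fun ℓ _ => by
      have : qmat (0 : EN N →L[ℝ] EN N) = 0 := by ext; simp [qmat]
      simp [this]⟩

lemma reflDiff_pos {B : Set (EN N)} (hB : IsRadialDomain B) {u : EN N → ℝ → ℝ}
    (hu : ContinuousOn (fun p : EN N × ℝ => u p.1 p.2) (closure B ×ˢ Ici 0))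
    (hbc : ∀ x ∈ frontier B, ∀ t ∈ Ioi (0:ℝ), u x t = 0) {e : EN N} (he : ‖e‖ = 1)
    {α L : ℝ} (hα : 0 < α) (hL : 0 ≤ L)
    (hsup : ∀ x ∈ B, ∀ t, 0 < t → SuperAt α L (reflDiff u e) x t)
    (h0 : ∀ x ∈ halfDom B e, 0 ≤ reflDiff u e x 0)
    (h1 : ∃ x ∈ halfDom B e, 0 < reflDiff u e x 0) :
    ∀ x ∈ halfDom B e, ∀ t, 0 < t → 0 < reflDiff u e x t := by
  have hw := continuousOn_reflDiff hB hu he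
  have hnn := reflDiff_nonneg hB hu hbc he hα.le hL hsup h0
  have hDo := isOpen_halfDom hB e
  have prop : ∀ x₀ y : EN N, ∀ d t1 T : ℝ, 0 ≤ t1 → t1 < T → ball x₀ (2 * d) ⊆ halfDom B e →
      ‖y - x₀‖ < d → 0 < reflDiff u e x₀ t1 → 0 < reflDiff u e y T := by
    intro x₀ y d t1 T ht1 hT hball hy hpos
    refine propagate hα hL (isCompact_closedHalf hB e) hDo (halfDom_subset_closedHalf B e) hT
      (hw.mono (prod_mono inter_subset_left fun s hs => ht1.trans hs.1)) ?_ ?_ hball hy hpos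
    · exact fun x hx t ht => hnn x hx t (ht1.trans ht.1)
    · exact fun x hx t ht _ => hsup x hx.1 t (ht1.trans_lt ht)
  have hrad : ∀ x ∈ halfDom B e, ∃ d > 0, ball x (2 * d) ⊆ halfDom B e := fun x hx => by
    obtain ⟨d, hd, h⟩ := Metric.isOpen_iff.1 hDo x hx
    exact ⟨d / 2, by linarith, by rwa [mul_div_cancel₀ _ two_ne_zero]⟩
  set S : Set (EN N) := {x | x ∈ halfDom B e ∧ ∀ t, 0 < t → 0 < reflDiff u e x t} with hS
  have hSo : IsOpen S := by
    rw [Metric.isOpen_iff]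
    rintro x ⟨hx, hxt⟩
    obtain ⟨d, hd, hb⟩ := hrad x hx
    refine ⟨d, hd, fun y hy => ⟨hb (ball_subset_ball (by linarith) hy), fun t ht => ?_⟩⟩
    exact prop x y d (t / 2) t (by linarith) (by linarith) hb (by rwa [← dist_eq_norm])
      (hxt _ (by linarith))
  have hne : (halfDom B e ∩ S).Nonempty := by
    obtain ⟨x, hx, hx0⟩ := h1
    obtain ⟨d, hd, hb⟩ := hrad x hx
    exact ⟨x, hx, hx, fun t ht => prop x x d 0 t le_rfl ht hb (by simpa) hx0⟩
  have hcl : closure S ∩ halfDom B e ⊆ S := by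
    rintro x ⟨hxc, hx⟩
    obtain ⟨d, hd, hb⟩ := hrad x hx
    obtain ⟨y, hy, hyx⟩ := Metric.mem_closure_iff.1 hxc (d / 2) (by linarith)
    refine ⟨hx, fun t ht => prop y x (d / 2) (t / 2) t (by linarith) (by linarith) ?_
      (by rwa [← dist_eq_norm]) (hy.2 _ (by linarith))⟩
    intro z hz
    refine hb ?_
    rw [mem_ball] at hz ⊢
    have := dist_triangle z y x
    rw [dist_comm y x] at this
    linarith
  have := (hB.isPreconnected_halfDom e).subset_of_closure_inter_subset hSo hne hcl
  exact fun x hx => (this hx).2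

/-! ### Radial defining functions and boundary layers -/

/-- `Θ` is a smooth radial defining function of `B` (positive exactly on `B`), with gradient
`τ(x) x` and Hessian `Q(x)`, and with bounds on `B̄`. The last field says quantitatively that the
gradient does not vanish where `Θ` does. -/
structure RadialProfile (B : Set (EN N)) (Θ τ : EN N → ℝ) (Q : EN N → EN N →L[ℝ] EN N)
    (c M : ℝ) : Prop where
  c_pos : 0 < c
  one_le : 1 ≤ M
  cont : Continuous Θ
  mem_iff : ∀ x, x ∈ B ↔ 0 < Θ x
  le : ∀ x ∈ closure B, Θ x ≤ M
  norm_le : ∀ x ∈ closure B, ‖x‖ ≤ M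
  tau_le : ∀ x ∈ closure B, |τ x| ≤ M
  Q_le : ∀ x ∈ closure B, ‖Q x‖ ≤ M
  jet : ∀ x, Jet2 Θ x (τ x • x) (Q x)
  grad : ∀ x ∈ closure B, c ≤ τ x ^ 2 * ‖x‖ ^ 2 + M * Θ x

lemma RadialProfile.nonneg {B : Set (EN N)} {Θ τ : EN N → ℝ} {Q : EN N → EN N →L[ℝ] EN N}
    {c M : ℝ} (h : RadialProfile B Θ τ Q c M) {x : EN N} (hx : x ∈ closure B) : 0 ≤ Θ x := by
  have hc : IsClosed {x | 0 ≤ Θ x} := isClosed_le continuous_const h.cont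
  exact closure_minimal (fun y hy => ((h.mem_iff y).1 hy).le) hc hx

/-- For the ball `Θ = R² - |x|²`, for the annulus `Θ = (R² - |x|²)(|x|² - r²)`. -/
lemma IsRadialDomain.exists_profile {B : Set (EN N)} (hB : IsRadialDomain B) :
    ∃ Θ τ Q c M, RadialProfile B Θ τ Q c M := by
  have hjet : ∀ (h h' : ℝ → ℝ) (h'' : ℝ), (∀ y, HasDerivAt h (h' y) y) →
      (∀ y, HasDerivAt h' h'' y) → ∀ x : EN N, Jet2 (fun y => h (‖y‖ ^ 2)) x
        ((2 * h' (‖x‖ ^ 2)) • x) (h' (‖x‖ ^ 2) • ((2:ℝ) • ContinuousLinearMap.id ℝ (EN N)) +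
          h'' • rk1 ((2:ℝ) • x) ((2:ℝ) • x)) := by
    intro h h' h'' h1 h2 x
    have := (Jet2.normSq (0 : EN N) x).comp h1 (h2 _)
    simp only [sub_zero, smul_smul] at this
    rw [mul_comm (h' _) 2] at this
    convert this using 2
    rw [smul_smul, mul_comm]
  have hQ : ∀ (a h'' : ℝ) (x : EN N), ‖a • ((2:ℝ) • ContinuousLinearMap.id ℝ (EN N)) +
      h'' • rk1 ((2:ℝ) • x) ((2:ℝ) • x)‖ ≤ 2 * |a| + 4 * |h''| * ‖x‖ ^ 2 := by
    intro a h'' x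
    refine (norm_add_le _ _).trans (add_le_add ?_ ?_)
    · rw [norm_smul, norm_smul, Real.norm_eq_abs]
      have := ContinuousLinearMap.norm_id_le (𝕜 := ℝ) (E := EN N)
      norm_num
      nlinarith [abs_nonneg a]
    · rw [norm_smul, Real.norm_eq_abs]
      have h3 := norm_rk1_le ((2:ℝ) • x) ((2:ℝ) • x)
      rw [norm_smul] at h3
      norm_num at h3
      nlinarith [abs_nonneg h'']
  rcases hB with ⟨R, hR, rfl⟩ | ⟨r, R, hr, hrR, rfl⟩
  · have hcl : ∀ x ∈ closure (ball (0 : EN N) R), ‖x‖ ≤ R := fun x hx => by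
      simpa using closure_ball_subset_closedBall hx
    refine ⟨fun x => R ^ 2 - ‖x‖ ^ 2, fun _ => 2 * (-1), _, 4 * R ^ 2, 4 + R + R ^ 2,
      ⟨by positivity, by nlinarith, by fun_prop, ?_, ?_, ?_, ?_, ?_,
        hjet (fun ρ => R ^ 2 - ρ) (fun _ => -1) 0 ?_ ?_, ?_⟩⟩
    · intro x
      simp only [mem_ball_zero_iff, sub_pos]
      exact (sq_lt_sq₀ (norm_nonneg _) hR.le).symm
    · intro x hx
      nlinarith [sq_nonneg ‖x‖]
    · intro x hx
      nlinarith [hcl x hx]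
    · intro x hx
      rw [abs_le]; constructor <;> nlinarith
    · intro x hx
      refine (hQ _ _ _).trans ?_
      norm_num
      nlinarith
    · intro y
      simpa using (hasDerivAt_id y).const_sub (R ^ 2)
    · exact fun y => hasDerivAt_const _ _
    · intro x hx
      have := hcl x hx
      have h2 : ‖x‖ ^ 2 ≤ R ^ 2 := pow_le_pow_left₀ (norm_nonneg _) this 2
      nlinarith [sq_nonneg ‖x‖, mul_nonneg (sub_nonneg.2 h2) hR.le, sq_nonneg R,
        mul_nonneg (sub_nonneg.2 h2) (sq_nonneg R)]
  · have hcl : ∀ x ∈ closure {x : EN N | r < ‖x‖ ∧ ‖x‖ < R}, r ≤ ‖x‖ ∧ ‖x‖ ≤ R := by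
      have : IsClosed {x : EN N | r ≤ ‖x‖ ∧ ‖x‖ ≤ R} :=
        (isClosed_le continuous_const continuous_norm).inter
          (isClosed_le continuous_norm continuous_const)
      have hsub : {x : EN N | r < ‖x‖ ∧ ‖x‖ < R} ⊆ {x : EN N | r ≤ ‖x‖ ∧ ‖x‖ ≤ R} :=
        fun y hy => ⟨hy.1.le, hy.2.le⟩
      exact fun x hx => closure_minimal hsub this hx
    have hR : 0 < R := hr.trans hrR
    have hcl2 : ∀ x ∈ closure {x : EN N | r < ‖x‖ ∧ ‖x‖ < R},
        r ^ 2 ≤ ‖x‖ ^ 2 ∧ ‖x‖ ^ 2 ≤ R ^ 2 := fun x hx =>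
      ⟨pow_le_pow_left₀ hr.le (hcl x hx).1 2, pow_le_pow_left₀ (norm_nonneg _) (hcl x hx).2 2⟩
    have hrR2 : r ^ 2 < R ^ 2 := pow_lt_pow_left₀ hrR hr.le two_ne_zero
    refine ⟨fun x => (R ^ 2 - ‖x‖ ^ 2) * (‖x‖ ^ 2 - r ^ 2),
      fun x => 2 * (R ^ 2 + r ^ 2 - 2 * ‖x‖ ^ 2), _,
      4 * r ^ 2 * (R ^ 2 - r ^ 2) ^ 2, 1 + R + 16 * R ^ 2 + R ^ 2 * R ^ 2,
      ⟨?_, by nlinarith, by fun_prop, ?_, ?_, ?_, ?_, ?_,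
        hjet (fun ρ => (R ^ 2 - ρ) * (ρ - r ^ 2)) (fun ρ => R ^ 2 + r ^ 2 - 2 * ρ) (-2) ?_ ?_, ?_⟩⟩
    · have : 0 < R ^ 2 - r ^ 2 := by linarith
      positivity
    · intro x
      constructor
      · rintro ⟨h1, h2⟩
        have a1 : r ^ 2 < ‖x‖ ^ 2 := pow_lt_pow_left₀ h1 hr.le two_ne_zero
        have a2 : ‖x‖ ^ 2 < R ^ 2 := pow_lt_pow_left₀ h2 (norm_nonneg _) two_ne_zero
        exact mul_pos (by linarith) (by linarith)
      · intro h
        rcases pos_and_pos_or_neg_and_neg_of_mul_pos h with ⟨a, b⟩ | ⟨a, b⟩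
        · exact ⟨lt_of_pow_lt_pow_left₀ 2 (norm_nonneg _) (by linarith),
            lt_of_pow_lt_pow_left₀ 2 hR.le (by linarith)⟩
        · linarith
    · intro x hx
      obtain ⟨a, b⟩ := hcl2 x hx
      have := mul_le_mul (show R ^ 2 - ‖x‖ ^ 2 ≤ R ^ 2 by nlinarith [sq_nonneg ‖x‖])
        (show ‖x‖ ^ 2 - r ^ 2 ≤ R ^ 2 by nlinarith [sq_nonneg r]) (by linarith) (by positivity)
      nlinarith
    · intro x hx
      nlinarith [(hcl x hx).2]
    · intro x hx
      obtain ⟨a, b⟩ := hcl2 x hx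
      rw [abs_le]; constructor <;> nlinarith
    · intro x hx
      obtain ⟨a, b⟩ := hcl2 x hx
      refine (hQ _ _ _).trans ?_
      have : |R ^ 2 + r ^ 2 - 2 * ‖x‖ ^ 2| ≤ R ^ 2 := by
        rw [abs_le]; constructor <;> nlinarith
      norm_num
      nlinarith
    · intro y
      refine (((hasDerivAt_id y).const_sub (R ^ 2)).mul
        ((hasDerivAt_id y).sub_const (r ^ 2))).congr_deriv ?_
      simp only [id]
      ring
    · intro y
      simpa using ((hasDerivAt_id y).const_mul 2).const_sub (R ^ 2 + r ^ 2)
    · intro x hx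
      obtain ⟨a, b⟩ := hcl2 x hx
      set ρ := ‖x‖ ^ 2
      have hθ : 0 ≤ (R ^ 2 - ρ) * (ρ - r ^ 2) := mul_nonneg (by linarith) (by linarith)
      have e1 : (2 * (R ^ 2 + r ^ 2 - 2 * ρ)) ^ 2 * ρ
          = 4 * ρ * (R ^ 2 - r ^ 2) ^ 2 - 16 * ρ * ((R ^ 2 - ρ) * (ρ - r ^ 2)) := by ring
      have h1 := mul_le_mul_of_nonneg_right a (sq_nonneg (R ^ 2 - r ^ 2))
      have h2 := mul_le_mul_of_nonneg_right b hθ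
      have h3 : 0 ≤ (1 + R + R ^ 2 * R ^ 2) * ((R ^ 2 - ρ) * (ρ - r ^ 2)) := by positivity
      rw [e1]
      nlinarith

/-- The barrier `((1 - f/δ)₊)³` near the zero set of a function `f` with nonvanishing gradient
there is a subsolution, with a gain of order `δ⁻²` where `f < δ/2`. -/
lemma layer_barrier {α L δ m C : ℝ} (hα : 0 < α) (hL : 0 ≤ L) (hδ : 0 < δ) (hm : 0 ≤ m)
    {f : EN N → ℝ} {x v : EN N} {Q : EN N →L[ℝ] EN N} (hf : Jet2 f x v Q) (hf0 : 0 ≤ f x)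
    (hv : f x < δ → m ≤ ‖v‖ ^ 2) (hQC : ‖Q‖ ≤ C) (hvC : ‖v‖ ≤ C)
    (hδm : 2 * (L * C * δ) ≤ α * m) :
    ∃ V W, Jet2 (fun y => posPow 3 (1 - f y / δ)) x V W ∧ ∀ ℓ ∈ EllClass N α L,
      0 ≤ ℓ (qmat W) - L * ‖V‖ ∧
        (f x < δ / 2 → 3 * (α * m) / (2 * δ ^ 2) ≤ ℓ (qmat W) - L * ‖V‖) := by
  have hj := ((Jet2.const 1 x).add (hf.const_mul (-1 / δ))).posPow 0
  have hfun : (fun y => posPow 3 (1 - f y / δ))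
      = fun y => posPow (0 + 3) (1 + -1 / δ * f y) := by
    ext y; congr 1; ring
  refine ⟨_, _, hfun ▸ hj, fun ℓ hℓ => ?_⟩
  have hC : 0 ≤ C := (norm_nonneg _).trans hvC
  have hrw : (1:ℝ) + -1 / δ * f x = 1 - f x / δ := by ring
  rw [hrw]
  simp only [Nat.cast_zero, zero_add]
  rw [qmat_add, qmat_smul, qmat_smul, qmat_smul, map_add, map_smul, map_smul, map_smul, norm_smul,
    norm_smul]
  simp only [smul_eq_mul]
  set y := 1 - f x / δ with hy
  have hy1 : y ≤ 1 := by
    have : 0 ≤ f x / δ := by positivity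
    linarith
  rcases le_or_gt y 0 with h | h
  · rw [posPow_of_nonpos two_ne_zero h, posPow_of_nonpos one_ne_zero h]
    simp only [mul_zero, zero_mul, add_zero, norm_zero, sub_zero, le_refl, true_and]
    intro h2
    exfalso
    have : f x / δ < 1 / 2 := by rw [div_lt_iff₀ hδ]; linarith
    linarith
  have hfδ : f x < δ := by
    have : f x / δ < 1 := by linarith
    rwa [div_lt_one hδ] at this
  have hv := hv hfδ
  rw [posPow_of_nonneg _ h.le, posPow_of_nonneg _ h.le, Real.norm_eq_abs, Real.norm_eq_abs,
    abs_of_pos (by positivity : 0 < 3 * y ^ 2), abs_div, abs_neg, abs_one, abs_of_pos hδ]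
  have b1 := ell_rk1 hℓ ((-1 / δ) • v)
  have b2 : ℓ (qmat Q) ≤ L * C := by
    have := (abs_le.1 (hℓ.2 (qmat Q))).2
    have h2 := mul_le_mul_of_nonneg_left ((norm_qmat_le Q).trans hQC) hL
    linarith
  rw [norm_smul, mul_pow, Real.norm_eq_abs, sq_abs] at b1
  have b3 : α * ((-1 / δ) ^ 2 * ‖v‖ ^ 2) ≥ α * m / δ ^ 2 := by
    have : α * ((-1 / δ) ^ 2 * ‖v‖ ^ 2) = α * ‖v‖ ^ 2 / δ ^ 2 := by ring
    rw [this]; gcongr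
  have b4 : L * ‖v‖ ≤ L * C := by gcongr
  -- everything is expressed through `X = α m / δ²` and `Z = L C / δ ≤ X / 2`
  set X := α * m / δ ^ 2 with hX
  have hZ : L * C / δ ≤ X / 2 := by
    rw [hX, div_div, div_le_div_iff₀ hδ (by positivity)]
    nlinarith
  have hX0 : 0 ≤ X := by positivity
  have b5 : -(L * C / δ) ≤ -1 / δ * ℓ (qmat Q) := by
    have := div_le_div_of_nonneg_right b2 hδ.le
    have e : -1 / δ * ℓ (qmat Q) = -(ℓ (qmat Q) / δ) := by ring
    rw [e]; linarith
  have b6 : 1 / δ * ‖v‖ * L ≤ L * C / δ := by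
    have := div_le_div_of_nonneg_right b4 hδ.le
    have e : 1 / δ * ‖v‖ * L = L * ‖v‖ / δ := by ring
    rw [e]; linarith
  have b7 : 3 * y * X ≤ 3 * y ^ 2 * (-1 / δ * ℓ (qmat Q)) +
      3 * (2 * y ^ 1) * ℓ (qmat (rk1 ((-1 / δ) • v) ((-1 / δ) • v))) -
      L * (3 * y ^ 2 * (1 / δ * ‖v‖)) := by
    have c1 := mul_le_mul_of_nonneg_left (show -X ≤ -1 / δ * ℓ (qmat Q) - 1 / δ * ‖v‖ * L by
      linarith) (show 0 ≤ 3 * y ^ 2 by positivity)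
    have c2 := mul_le_mul_of_nonneg_left (b3.le.trans b1) (show 0 ≤ 3 * (2 * y ^ 1) by positivity)
    have c3 : y ^ 2 * X ≤ y * X := by
      refine mul_le_mul_of_nonneg_right ?_ hX0
      nlinarith
    nlinarith
  refine ⟨?_, fun h2 => ?_⟩
  · refine le_trans (by positivity) (b7.trans (le_of_eq ?_))
    simp
  · have h3 : 1 / 2 ≤ y := by
      have : f x / δ ≤ 1 / 2 := by rw [div_le_iff₀ hδ]; linarith
      linarith
    have e : 3 * (α * m) / (2 * δ ^ 2) = 3 * (1 / 2) * X := by rw [hX]; ring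
    have : 3 * (1 / 2) * X ≤ 3 * y * X := by gcongr
    rw [e]
    refine this.trans (b7.trans (le_of_eq ?_))
    simp

/-! ### A barrier uniform in the direction -/

/-- High powers of `(g - s)₊`, where `g = ⟪x, e⟫ Θ`, are subsolutions up to a zeroth-order term,
uniformly in `e` and in small `s ≥ 0`. The point is the bound `|∇g|² ≥ c₁ g - C g²`, valid even
at the edge of `B(e)`, where both factors of `g` vanish. -/
lemma interior_barrier {B : Set (EN N)} {Θ τ : EN N → ℝ} {Q : EN N → EN N →L[ℝ] EN N} {c M : ℝ}
    (hp : RadialProfile B Θ τ Q c M) {α L : ℝ} (hα : 0 < α) (hL : 0 ≤ L) :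
    ∃ (k : ℕ) (κ s₀ : ℝ), 0 ≤ κ ∧ 0 < s₀ ∧ ∀ e : EN N, ‖e‖ = 1 → ∀ x ∈ closedHalf B e,
      ∀ s, 0 ≤ s → s ≤ s₀ → ∃ V W, Jet2 (fun y => posPow (k + 3) (⟪y, e⟫ * Θ y - s)) x V W ∧
        ∀ ℓ ∈ EllClass N α L, -(κ * posPow (k + 3) (⟪x, e⟫ * Θ x - s)) ≤
          ℓ (qmat W) - L * ‖V‖ - L * posPow (k + 3) (⟪x, e⟫ * Θ x - s) := by
  have hc := hp.c_pos
  have hM := hp.one_le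
  set c1 : ℝ := min (c / 2) 1 with hc1
  have hc1p : 0 < c1 := lt_min (by linarith) one_pos
  set C'' : ℝ := 9 * M ^ 2 / (2 * c) with hC''
  have hC''p : 0 < C'' := by positivity
  set C2 : ℝ := L * (3 * M ^ 2) + L * (M ^ 3 + M) with hC2
  obtain ⟨k, hk⟩ := exists_nat_ge (C2 / (α * c1))
  have hk' : C2 ≤ (k + 2) * (α * c1) := by
    rw [div_le_iff₀ (by positivity)] at hk
    nlinarith [mul_pos hα hc1p]
  set K : ℝ := (k + 2) * α * (2 * C'') with hK
  refine ⟨k, (k + 3) * K + L, c1 / (2 * C''), by positivity, by positivity, ?_⟩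
  intro e he x hx s hs hs0
  have hj := ((Jet2.inner e x).mul (hp.jet x)).sub (Jet2.const s x)
  refine ⟨_, _, hj.posPow k, fun ℓ hℓ => ?_⟩
  have hΘ := hp.nonneg hx.1
  have hΘM := hp.le x hx.1
  have hxM := hp.norm_le x hx.1
  have hτM := hp.tau_le x hx.1
  have hQM := hp.Q_le x hx.1
  have hgr := hp.grad x hx.1
  have hb0 : 0 ≤ ⟪x, e⟫ := hx.2
  have hbM : ⟪x, e⟫ ≤ M := by
    have := real_inner_le_norm x e
    rw [he, mul_one] at this
    linarith
  set b := ⟪x, e⟫ with hb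
  have hτx : ‖τ x • x‖ ≤ M * M := by
    rw [norm_smul, Real.norm_eq_abs]; gcongr
  have hpb := power_barrier (α := α) (ct := 0) hL hℓ k (y := b * Θ x - s) (C := C2) (K := K)
    (v := b • τ x • x + Θ x • e - 0)
    (Q := b • Q x + Θ x • (0 : EN N →L[ℝ] EN N) + (rk1 e (τ x • x) + rk1 (τ x • x) e) - 0) ?_ ?_
  · rw [mul_zero, sub_zero] at hpb
    linarith
  · intro _
    have z1 : Θ x • (0 : EN N →L[ℝ] EN N) = 0 := by ext; simp
    rw [sub_zero, sub_zero, z1, add_zero, add_zero, hC2]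
    have n1 : ‖b • Q x + (rk1 e (τ x • x) + rk1 (τ x • x) e)‖ ≤ 3 * M ^ 2 := by
      have a1 : ‖b • Q x‖ ≤ M * M := by
        rw [norm_smul, Real.norm_eq_abs, abs_of_nonneg hb0]; gcongr
      have a2 := norm_rk1_le e (τ x • x)
      have a3 := norm_rk1_le (τ x • x) e
      rw [he] at a2 a3
      have := norm_add_le (b • Q x) (rk1 e (τ x • x) + rk1 (τ x • x) e)
      have := norm_add_le (rk1 e (τ x • x)) (rk1 (τ x • x) e)
      nlinarith
    have n2 : ‖b • τ x • x + Θ x • e‖ ≤ M ^ 3 + M := by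
      have a1 : ‖b • τ x • x‖ ≤ M * (M * M) := by
        rw [norm_smul, Real.norm_eq_abs, abs_of_nonneg hb0]; gcongr
      have a2 : ‖Θ x • e‖ ≤ M := by
        rw [norm_smul, Real.norm_eq_abs, abs_of_nonneg hΘ, he, mul_one]; exact hΘM
      have := norm_add_le (b • τ x • x) (Θ x • e)
      nlinarith
    gcongr
  · intro hy
    set y := b * Θ x - s with hyd
    have e1 : ‖b • τ x • x + Θ x • e - 0‖ ^ 2
        = b ^ 2 * (τ x ^ 2 * ‖x‖ ^ 2) + 2 * (τ x * (b ^ 2 * Θ x)) + Θ x ^ 2 := by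
      rw [sub_zero, norm_add_sq_real, norm_smul, norm_smul, norm_smul, he, inner_smul_left,
        inner_smul_left, inner_smul_right, ← hb]
      simp only [Real.norm_eq_abs, mul_pow, sq_abs, conj_trivial]
      ring
    have h1 : c1 * (b * Θ x) - C'' * (b * Θ x) ^ 2 ≤ ‖b • τ x • x + Θ x • e - 0‖ ^ 2 := by
      rw [e1]
      have a1 := mul_le_mul_of_nonneg_left hgr (sq_nonneg b)
      have a2 : -(M * (b ^ 2 * Θ x)) ≤ τ x * (b ^ 2 * Θ x) := by
        rw [← neg_mul]
        exact mul_le_mul_of_nonneg_right (abs_le.1 hτM).1 (by positivity)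
      have a3 : 3 * M * Θ x ≤ c / 2 + C'' * Θ x ^ 2 := by
        have : c / 2 + C'' * Θ x ^ 2 - 3 * M * Θ x = (c - 3 * M * Θ x) ^ 2 / (2 * c) := by
          rw [hC'']; field_simp; ring
        have h0 : 0 ≤ (c - 3 * M * Θ x) ^ 2 / (2 * c) := by positivity
        linarith
      have a4 := mul_le_mul_of_nonneg_left a3 (sq_nonneg b)
      have a5 : c1 * (b * Θ x) ≤ c / 2 * b ^ 2 + Θ x ^ 2 := by
        have l1 : c1 ≤ c / 2 := min_le_left _ _
        have l2 : c1 ≤ 1 := min_le_right _ _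
        have l3 := mul_le_mul_of_nonneg_right l1 (sq_nonneg b)
        have l4 := mul_le_mul_of_nonneg_right l2 (sq_nonneg (Θ x))
        have l5 := mul_nonneg hc1p.le (sq_nonneg (b - Θ x))
        have l6 := mul_nonneg hc1p.le (mul_nonneg hb0 hΘ)
        linarith
      linarith
    have h2 : c1 * y - 2 * C'' * y ^ 2 ≤ ‖b • τ x • x + Θ x • e - 0‖ ^ 2 := by
      have hg : b * Θ x = y + s := by rw [hyd]; ring
      rw [hg] at h1
      have h3 : 2 * C'' * s ≤ c1 := by
        rw [le_div_iff₀ (by positivity)] at hs0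
        linarith
      have h4 := mul_le_mul_of_nonneg_right h3 hs
      have h5 := mul_nonneg hC''p.le (sq_nonneg (y - s))
      linarith
    have h3 := mul_le_mul_of_nonneg_left h2 (show (0:ℝ) ≤ (k + 2) * α by positivity)
    have h4 := mul_le_mul_of_nonneg_right hk' hy.le
    rw [hK]
    linarith

/-- The barrier used for all directions `e`: for `A / ε` large, the exponentially decaying
function `e^{-κ(t-1)} (A (g - s)₊^{k+3} + ε h)` is a subsolution on `B(e)`. All constants are
independent of `e`. -/
lemma exists_barrier {B : Set (EN N)} {Θ τ : EN N → ℝ} {Q : EN N → EN N →L[ℝ] EN N} {c M : ℝ}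
    (hp : RadialProfile B Θ τ Q c M) {α L : ℝ} (hα : 0 < α) (hL : 0 ≤ L) :
    ∃ (k : ℕ) (κ s Λ : ℝ), 0 < κ ∧ 0 < s ∧ 0 < Λ ∧ ∀ e : EN N, ‖e‖ = 1 →
      ∃ h : EN N → ℝ, Continuous h ∧ (∀ x ∈ closedHalf B e, -3 ≤ h x ∧ h x ≤ -1) ∧
        ∀ A ε, 0 < ε → Λ * ε ≤ A → ∀ x ∈ closedHalf B e, ∀ t,
          SubAt α L (fun x t => Real.exp (-κ * (t - 1)) *
            (A * posPow (k + 3) (⟪x, e⟫ * Θ x - s) + ε * h x)) x t := by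
  obtain ⟨k, κ₀, s₀, hκ₀, hs₀, hint⟩ := interior_barrier hp hα hL
  have hc := hp.c_pos
  have hM := hp.one_le
  set κ := κ₀ + 1 with hκ
  set m : ℝ := min 1 (c / 2) with hm
  have hmp : 0 < m := lt_min one_pos (by linarith)
  obtain ⟨δ, hδ, hδ1, hδ2, hδ3, hδ4⟩ : ∃ δ > 0, 2 * (L * (M * M) * δ) ≤ α * m ∧ M * δ ≤ c / 2 ∧
      δ ^ 2 / 8 ≤ s₀ ∧ (3 * κ + 3 * L) * (2 * δ ^ 2) ≤ 3 * (α * m) := by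
    have h1 : ∀ᶠ δ in 𝓝[>] (0:ℝ), 2 * (L * (M * M) * δ) < α * m := by
      have : Tendsto (fun δ : ℝ => 2 * (L * (M * M) * δ)) (𝓝 0) (𝓝 (2 * (L * (M * M) * 0))) :=
        Continuous.tendsto (by fun_prop) 0
      exact (this.mono_left nhdsWithin_le_nhds).eventually_lt_const (by simp; positivity)
    have h2 : ∀ᶠ δ in 𝓝[>] (0:ℝ), M * δ < c / 2 := by
      have : Tendsto (fun δ : ℝ => M * δ) (𝓝 0) (𝓝 (M * 0)) := Continuous.tendsto (by fun_prop) 0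
      exact (this.mono_left nhdsWithin_le_nhds).eventually_lt_const (by simp; positivity)
    have h3 : ∀ᶠ δ in 𝓝[>] (0:ℝ), δ ^ 2 / 8 < s₀ := by
      have : Tendsto (fun δ : ℝ => δ ^ 2 / 8) (𝓝 0) (𝓝 (0 ^ 2 / 8)) :=
        Continuous.tendsto (by fun_prop) 0
      exact (this.mono_left nhdsWithin_le_nhds).eventually_lt_const (by simpa using hs₀)
    have h4 : ∀ᶠ δ in 𝓝[>] (0:ℝ), (3 * κ + 3 * L) * (2 * δ ^ 2) < 3 * (α * m) := by
      have : Tendsto (fun δ : ℝ => (3 * κ + 3 * L) * (2 * δ ^ 2)) (𝓝 0)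
        (𝓝 ((3 * κ + 3 * L) * (2 * 0 ^ 2))) := Continuous.tendsto (by fun_prop) 0
      exact (this.mono_left nhdsWithin_le_nhds).eventually_lt_const (by simp; positivity)
    obtain ⟨δ, ⟨⟨⟨a1, a2⟩, a3⟩, a4⟩, a5⟩ :=
      ((((h1.and h2).and h3).and h4).and self_mem_nhdsWithin).exists
    exact ⟨δ, a5, a1.le, a2.le, a3.le, a4.le⟩
  have hκp : 0 < κ := by linarith
  set s := δ ^ 2 / 8 with hs
  have hsp : 0 < s := by positivity
  refine ⟨k, κ, s, (3 * κ + 3 * L) / s ^ (k + 3), hκp, hsp, by positivity, fun e he => ?_⟩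
  refine ⟨fun x => posPow 3 (1 - ⟪x, e⟫ / δ) + posPow 3 (1 - Θ x / δ) + (-3), ?_, ?_, ?_⟩
  · have h1 := continuous_posPow 3
    have h2 := hp.cont
    have h3 : Continuous fun x : EN N => posPow 3 (1 - ⟪x, e⟫ / δ) := h1.comp (by fun_prop)
    have h4 : Continuous fun x : EN N => posPow 3 (1 - Θ x / δ) := h1.comp (by fun_prop)
    exact (h3.add h4).add continuous_const
  · intro x hx
    have hb0 : 0 ≤ ⟪x, e⟫ / δ := div_nonneg hx.2 hδ.le
    have hΘ : 0 ≤ Θ x / δ := div_nonneg (hp.nonneg hx.1) hδ.le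
    have h1 := posPow_nonneg 3 (1 - ⟪x, e⟫ / δ)
    have h2 := posPow_nonneg 3 (1 - Θ x / δ)
    have h3 := posPow_le (k := 3) zero_le_one (show 1 - ⟪x, e⟫ / δ ≤ 1 by linarith)
    have h4 := posPow_le (k := 3) zero_le_one (show 1 - Θ x / δ ≤ 1 by linarith)
    constructor <;> linarith
  intro A ε hε hA x hx t
  have hb0 : 0 ≤ ⟪x, e⟫ := hx.2
  have hΘ := hp.nonneg hx.1
  obtain ⟨V1, W1, hj1, hl1⟩ := hint e he x hx s hsp.le hδ3
  obtain ⟨V2, W2, hj2, hl2⟩ := layer_barrier (C := M * M) hα hL hδ hmp.le (Jet2.inner e x) hb0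
    (fun _ => by rw [he, one_pow]; exact min_le_left 1 (c / 2)) (by simp; positivity)
    (by rw [he]; nlinarith) hδ1
  obtain ⟨V3, W3, hj3, hl3⟩ := layer_barrier (C := M * M) hα hL hδ hmp.le (hp.jet x) hΘ
    (fun h => by
      rw [norm_smul, mul_pow, Real.norm_eq_abs, sq_abs]
      have := hp.grad x hx.1
      have h2 : M * Θ x ≤ M * δ := by gcongr
      have := min_le_right 1 (c / 2)
      linarith) ((hp.Q_le x hx.1).trans (by nlinarith))
    (by
      rw [norm_smul, Real.norm_eq_abs]
      have := hp.tau_le x hx.1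
      have := hp.norm_le x hx.1
      gcongr) hδ1
  set E := Real.exp (-κ * (t - 1)) with hE
  have hEp : 0 < E := Real.exp_pos _
  have hEt : HasDerivAt (fun r => Real.exp (-κ * (r - 1))) (E * -κ) t := by
    have := (((hasDerivAt_id t).sub_const 1).const_mul (-κ)).exp
    rwa [mul_one] at this
  have hA0 : 0 ≤ A := le_trans (by positivity) hA
  refine ⟨_, _, _, hEt.mul_const _, ((hj1.const_mul A).add
    (((hj2.add hj3).add (Jet2.const (-3) x)).const_mul ε)).const_mul E, fun ℓ hℓ => ?_⟩
  have q1 := hl1 ℓ hℓ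
  obtain ⟨q2, q2'⟩ := hl2 ℓ hℓ
  obtain ⟨q3, q3'⟩ := hl3 ℓ hℓ
  have p0 := posPow_nonneg (k + 3) (⟪x, e⟫ * Θ x - s)
  have p2 := posPow_nonneg 3 (1 - ⟪x, e⟫ / δ)
  have p3 := posPow_nonneg 3 (1 - Θ x / δ)
  have p2' := posPow_le (k := 3) zero_le_one (show 1 - ⟪x, e⟫ / δ ≤ 1 by
    have := div_nonneg hb0 hδ.le; linarith)
  have p3' := posPow_le (k := 3) zero_le_one (show 1 - Θ x / δ ≤ 1 by
    have := div_nonneg hΘ hδ.le; linarith)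
  set φ := posPow (k + 3) (⟪x, e⟫ * Θ x - s) with hφ
  set h2 := posPow 3 (1 - ⟪x, e⟫ / δ) with hh2
  set h3 := posPow 3 (1 - Θ x / δ) with hh3
  simp only [qmat_smul, qmat_add, map_smul, map_add, smul_eq_mul, add_zero]
  have hzero : qmat (0 : EN N →L[ℝ] EN N) = 0 := by ext; simp [qmat]
  -- either the layer terms give a gain, or `g` is at least `2 s`
  have hgain : 3 * κ * ε ≤ A * φ + ε * (ℓ (qmat W2) - L * ‖V2‖ + (ℓ (qmat W3) - L * ‖V3‖) - 3 * L) := by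
    have hmain : 3 * κ + 3 * L ≤ 3 * (α * m) / (2 * δ ^ 2) := by
      rw [le_div_iff₀ (by positivity)]; exact hδ4
    have hAφ : 0 ≤ A * φ := mul_nonneg hA0 p0
    by_cases hcase : ⟪x, e⟫ < δ / 2 ∨ Θ x < δ / 2
    · have : 3 * κ ≤ ℓ (qmat W2) - L * ‖V2‖ + (ℓ (qmat W3) - L * ‖V3‖) - 3 * L := by
        rcases hcase with h | h
        · linarith [q2' h]
        · linarith [q3' h]
      have := mul_le_mul_of_nonneg_left this hε.le
      linarith
    · push Not at hcase
      have hg : s ≤ ⟪x, e⟫ * Θ x - s := by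
        have := mul_le_mul hcase.1 hcase.2 (by positivity) hb0
        rw [hs]; nlinarith
      have hφs : s ^ (k + 3) ≤ φ := by
        rw [hφ, posPow_of_nonneg _ (hsp.le.trans hg)]
        gcongr
      have h5 : (3 * κ + 3 * L) * ε ≤ A * φ := by
        calc (3 * κ + 3 * L) * ε = ((3 * κ + 3 * L) / s ^ (k + 3) * ε) * s ^ (k + 3) := by
              field_simp
          _ ≤ A * φ := by gcongr
      have := mul_nonneg hε.le (add_nonneg q2 q3)
      linarith
  have hV : ‖E • (A • V1 + ε • (V2 + V3))‖ ≤ E * (A * ‖V1‖ + ε * (‖V2‖ + ‖V3‖)) := by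
    rw [norm_smul, Real.norm_eq_abs, abs_of_pos hEp]
    refine mul_le_mul_of_nonneg_left ((norm_add_le _ _).trans ?_) hEp.le
    rw [norm_smul, norm_smul, Real.norm_eq_abs, Real.norm_eq_abs, abs_of_nonneg hA0,
      abs_of_pos hε]
    have := norm_add_le V2 V3
    gcongr
  have habs : |E * (A * φ + ε * (h2 + h3 + -3))| ≤ E * (A * φ + ε * 3) := by
    rw [abs_mul, abs_of_pos hEp]
    refine mul_le_mul_of_nonneg_left ((abs_add_le _ _).trans ?_) hEp.le
    rw [abs_of_nonneg (mul_nonneg hA0 p0), abs_mul, abs_of_pos hε]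
    have : |h2 + h3 + -3| ≤ 3 := by rw [abs_le]; constructor <;> linarith
    gcongr
  have hV' := mul_le_mul_of_nonneg_left hV hL
  have habs' := mul_le_mul_of_nonneg_left habs hL
  have q1' := mul_le_mul_of_nonneg_left q1 hA0
  have hh : -κ * (A * φ + ε * (h2 + h3 + -3)) ≤ -(κ * (A * φ)) + 3 * κ * ε := by
    have : 0 ≤ κ * (ε * (h2 + h3)) := by positivity
    linarith
  have key : -κ * (A * φ + ε * (h2 + h3 + -3)) ≤
      A * ℓ (qmat W1) + ε * (ℓ (qmat W2) + ℓ (qmat W3)) - L * (A * ‖V1‖ + ε * (‖V2‖ + ‖V3‖))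
        - L * (A * φ + ε * 3) := by
    rw [hκ] at hh hgain ⊢
    linarith
  have key' := mul_le_mul_of_nonneg_left key hEp.le
  linarith

/-! ### Perturbation of the direction -/

lemma norm_reflHyp_sub_le {e e' : EN N} (he : ‖e‖ = 1) (he' : ‖e'‖ = 1) (x : EN N) :
    ‖reflHyp e x - reflHyp e' x‖ ≤ 4 * (‖x‖ * ‖e' - e‖) := by
  have h : reflHyp e x - reflHyp e' x = (2 * ⟪x, e' - e⟫) • e' + (2 * ⟪x, e⟫) • (e' - e) := by
    unfold reflHyp
    rw [inner_sub_right]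
    module
  rw [h]
  refine (norm_add_le _ _).trans ?_
  rw [norm_smul, norm_smul, he', Real.norm_eq_abs, Real.norm_eq_abs, abs_mul, abs_mul, abs_two]
  have h1 := abs_real_inner_le_norm x (e' - e)
  have h2 := abs_real_inner_le_norm x e
  rw [he, mul_one] at h2
  have h3 := mul_le_mul_of_nonneg_right h2 (norm_nonneg (e' - e))
  linarith

/-- If `u - u ∘ σ_{e'} ≥ -C e^{-κ(t-1)}` on `B(e')` for `t ≥ 1`, then `e' ∈ 𝓜`. -/
lemma mem_omegaReflSet_of_decay {B : Set (EN N)} (hB : IsRadialDomain B) {u : EN N → ℝ → ℝ}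
    {e : EN N} (he : ‖e‖ = 1) {C κ : ℝ} (hκ : 0 < κ)
    (h : ∀ x ∈ halfDom B e, ∀ t, 1 ≤ t → -(C * Real.exp (-κ * (t - 1))) ≤ reflDiff u e x t) :
    e ∈ omegaReflSet B u := by
  refine ⟨he, ?_⟩
  rintro z ⟨_, t, ht, hz⟩ x hx
  have hlim : ∀ y ∈ closure B, Tendsto (fun n => u y (t n)) atTop (𝓝 (z y)) := by
    intro y hy
    rw [Metric.tendsto_atTop]
    intro ε hε
    obtain ⟨n₀, hn⟩ := hz (ε / 2) (by linarith)
    refine ⟨n₀, fun n hnn => ?_⟩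
    rw [Real.dist_eq]
    linarith [hn n hnn y hy]
  have h1 := (hlim x (subset_closure hx.1)).sub
    (hlim _ (subset_closure (hB.reflHyp_mem he hx.1)))
  have h2 : Tendsto (fun n => -(C * Real.exp (-κ * (t n - 1)))) atTop (𝓝 (-(C * 0))) := by
    refine ((Real.tendsto_exp_atBot.comp ?_).const_mul C).neg
    exact (tendsto_atTop_add_const_right _ (-1) ht).const_mul_atTop_of_neg (neg_lt_zero.2 hκ)
  have := le_of_tendsto_of_tendsto h2 h1 (by
    filter_upwards [ht.eventually_ge_atTop 1] with n hn using h x hx _ hn)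
  simp only [mul_zero, neg_zero] at this
  linarith

/-- The theorem for functions `u` all of whose reflection differences are supersolutions. -/
lemma nbhd_of_superAt {B : Set (EN N)} (hB : IsRadialDomain B) {u : EN N → ℝ → ℝ}
    (hu : ContinuousOn (fun p : EN N × ℝ => u p.1 p.2) (closure B ×ˢ Ici 0))
    (hbc : ∀ x ∈ frontier B, ∀ t ∈ Ioi (0:ℝ), u x t = 0)
    {α L : ℝ} (hα : 0 < α) (hL : 0 ≤ L)
    (hsup : ∀ e : EN N, ‖e‖ = 1 → ∀ x ∈ B, ∀ t, 0 < t → SuperAt α L (reflDiff u e) x t)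
    {e : EN N} (he : ‖e‖ = 1) (h0 : ∀ x ∈ halfDom B e, 0 ≤ reflDiff u e x 0)
    (h1 : ∃ x ∈ halfDom B e, 0 < reflDiff u e x 0) :
    ∃ ε > (0:ℝ), ∀ e' : EN N, ‖e'‖ = 1 → ‖e' - e‖ < ε → e' ∈ omegaReflSet B u := by
  obtain ⟨Θ, τ, Q, c, M, hp⟩ := hB.exists_profile
  obtain ⟨k, κ, s, Λ, hκ, hs, hΛ, hbar⟩ := exists_barrier hp hα hL
  have hM : 0 < M := one_pos.trans_le hp.one_le
  have hnn := reflDiff_nonneg hB hu hbc he hα.le hL (hsup e he) h0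
  have hpos := reflDiff_pos hB hu hbc he hα hL (hsup e he) h0 h1
  have hu1 : ContinuousOn (fun x => u x 1) (closure B) :=
    hu.comp (f := fun x => (x, (1:ℝ))) (by fun_prop) fun x hx => ⟨hx, by simp⟩
  have hw1 : ContinuousOn (fun x => reflDiff u e x 1) (closure B) :=
    (continuousOn_reflDiff hB hu he).comp (f := fun x => (x, (1:ℝ))) (by fun_prop)
      fun x hx => ⟨hx, by simp⟩
  -- on the part of `B(e)` where the barrier for nearby directions is positive, `u - u ∘ σ_e`
  -- has a positive lower bound at time `1`
  obtain ⟨η, hη, hηw⟩ : ∃ η > 0, ∀ x ∈ closedHalf B e, s / 2 ≤ ⟪x, e⟫ * Θ x →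
      2 * η ≤ reflDiff u e x 1 := by
    have hZ : IsCompact (closedHalf B e ∩ {x | s / 2 ≤ ⟪x, e⟫ * Θ x}) :=
      (isCompact_closedHalf hB e).inter_right (isClosed_le continuous_const
        (Continuous.mul (by fun_prop) hp.cont))
    obtain ⟨a, ha, haw⟩ := hZ.exists_forall_le' (hw1.mono fun x hx => hx.1.1) (a := 0) (by
      rintro x ⟨hx, hxs⟩
      have hg : 0 < ⟪x, e⟫ * Θ x := lt_of_lt_of_le (by positivity) hxs
      have hb : 0 ≤ ⟪x, e⟫ := hx.2
      refine hpos x ⟨(hp.mem_iff x).2 (pos_of_mul_pos_right hg hb), ?_⟩ 1 one_pos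
      exact pos_of_mul_pos_left hg (hp.nonneg hx.1))
    exact ⟨a / 2, by linarith, fun x hx hxs => by
      have := haw x ⟨hx, hxs⟩
      linarith⟩
  set A : ℝ := η / (M * M) ^ (k + 3) with hA
  have hAp : 0 < A := by positivity
  set ε : ℝ := A / Λ with hε
  have hεp : 0 < ε := by positivity
  have hζ : 0 < min η ε := lt_min hη hεp
  obtain ⟨d, hd, hdu⟩ := Metric.uniformContinuousOn_iff.1
    (hB.isCompact_closure.uniformContinuousOn_of_continuous hu1) (min η ε) hζ
  have hdu' : ∀ x ∈ closure B, ∀ y ∈ closure B, ‖x - y‖ < d →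
      u x 1 - u y 1 < η ∧ u x 1 - u y 1 < ε := by
    intro x hx y hy hxy
    have := hdu x hx y hy (by rwa [dist_eq_norm])
    rw [Real.dist_eq] at this
    have h2 := (le_abs_self _).trans_lt this
    exact ⟨h2.trans_le (min_le_left _ _), h2.trans_le (min_le_right _ _)⟩
  refine ⟨min (d / (4 * M)) (s / (2 * (M * M))), by positivity, fun e' he' hee => ?_⟩
  have hn1 : 4 * M * ‖e' - e‖ < d := by
    have := hee.trans_le (min_le_left _ _)
    rw [lt_div_iff₀ (by positivity)] at this
    linarith
  have hn2 : M * M * ‖e' - e‖ < s / 2 := by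
    have := hee.trans_le (min_le_right _ _)
    rw [lt_div_iff₀ (by positivity)] at this
    linarith
  have hin : ∀ x ∈ closure B, |⟪x, e'⟫ - ⟪x, e⟫| ≤ M * ‖e' - e‖ := by
    intro x hx
    rw [← inner_sub_right]
    refine (abs_real_inner_le_norm _ _).trans ?_
    have := hp.norm_le x hx
    gcongr
  have hrefl : ∀ x ∈ closure B, u (reflHyp e' x) 1 - u (reflHyp e x) 1 < η ∧
      u (reflHyp e' x) 1 - u (reflHyp e x) 1 < ε := by
    intro x hx
    refine hdu' _ (hB.reflHyp_mem_closure he' hx) _ (hB.reflHyp_mem_closure he hx) ?_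
    refine lt_of_le_of_lt ?_ hn1
    have h2 := norm_reflHyp_sub_le he he' x
    rw [norm_sub_rev]
    have := mul_le_mul_of_nonneg_right (hp.norm_le x hx) (norm_nonneg (e' - e))
    linarith
  have hwη : ∀ x ∈ closedHalf B e', s ≤ ⟪x, e'⟫ * Θ x → η ≤ reflDiff u e' x 1 := by
    intro x hx hxs
    have hΘ := hp.nonneg hx.1
    have hg : s / 2 ≤ ⟪x, e⟫ * Θ x := by
      have a1 := (abs_le.1 (hin x hx.1)).2
      have a2 := mul_le_mul_of_nonneg_right a1 hΘ
      have a3 := mul_le_mul_of_nonneg_left (hp.le x hx.1)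
        (show 0 ≤ M * ‖e' - e‖ by positivity)
      linarith
    have hb : 0 < ⟪x, e⟫ := pos_of_mul_pos_left (lt_of_lt_of_le (by positivity) hg) hΘ
    have b1 := hηw x ⟨hx.1, hb.le⟩ hg
    have b2 := (hrefl x hx.1).1
    unfold reflDiff at b1 ⊢
    linarith
  have hwε : ∀ x ∈ closedHalf B e', -ε ≤ reflDiff u e' x 1 := by
    intro x hx
    rcases le_or_gt 0 ⟪x, e⟫ with hb | hb
    · have b1 := hnn x ⟨hx.1, hb⟩ 1 zero_le_one
      have b2 := (hrefl x hx.1).2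
      unfold reflDiff at b1 ⊢
      linarith
    · -- `x` lies between the two hyperplanes, hence is close to its reflection
      have hb' : 0 ≤ ⟪x, e'⟫ := hx.2
      have a1 := (abs_le.1 (hin x hx.1)).2
      have a2 : ‖reflHyp e' x - x‖ < d := by
        have : reflHyp e' x - x = -((2 * ⟪x, e'⟫) • e') := by unfold reflHyp; abel
        rw [this, norm_neg, norm_smul, he', Real.norm_eq_abs, abs_of_nonneg (by positivity)]
        have : 0 ≤ M * ‖e' - e‖ := by positivity
        linarith
      have b2 := (hdu' _ (hB.reflHyp_mem_closure he' hx.1) x hx.1 a2).2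
      unfold reflDiff
      linarith
  obtain ⟨h, hhc, hh, hsub⟩ := hbar e' he'
  have hsub := hsub A ε hεp (by rw [hε, mul_div_cancel₀ _ hΛ.ne'])
  refine mem_omegaReflSet_of_decay hB he' (C := 3 * ε) hκ fun x hx T hT => ?_
  have hcmp := comparison hα.le hL (isCompact_closedHalf hB e') (isOpen_halfDom hB e')
    (halfDom_subset_closedHalf B e') (w := reflDiff u e')
    (ψ := fun x t => Real.exp (-κ * (t - 1)) *
            (A * posPow (k + 3) (⟪x, e'⟫ * Θ x - s) + ε * h x)) (t1 := 1) (T := T)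
    ((continuousOn_reflDiff hB hu he').mono (prod_mono inter_subset_left
      fun t ht => zero_le_one.trans ht.1)) ?_ ?_ ?_ ?_ ?_ x (halfDom_subset_closedHalf B e' hx) T
    ⟨hT, le_rfl⟩
  · refine le_trans ?_ hcmp
    have hx3 := (hh x (halfDom_subset_closedHalf B e' hx)).1
    have hE : 0 < Real.exp (-κ * (T - 1)) := Real.exp_pos _
    have := mul_nonneg hAp.le (posPow_nonneg (k + 3) (⟪x, e'⟫ * Θ x - s))
    have h4 : -(3 * ε) ≤ A * posPow (k + 3) (⟪x, e'⟫ * Θ x - s) + ε * h x := by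
      have := mul_le_mul_of_nonneg_left hx3 hεp.le
      linarith
    have := mul_le_mul_of_nonneg_left h4 hE.le
    linarith
  · refine Continuous.continuousOn ?_
    have c1 : Continuous fun p : EN N × ℝ => posPow (k + 3) (⟪p.1, e'⟫ * Θ p.1 - s) :=
      (continuous_posPow _).comp
        ((Continuous.mul (by fun_prop) (hp.cont.comp continuous_fst)).sub continuous_const)
    have c2 : Continuous fun p : EN N × ℝ => h p.1 := hhc.comp continuous_fst
    exact Continuous.mul (by fun_prop) ((continuous_const.mul c1).add (continuous_const.mul c2))
  · intro y hy
    have hy1 := (hh y hy).2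
    have hy1' := mul_le_mul_of_nonneg_left hy1 hεp.le
    simp only [sub_self, mul_zero, Real.exp_zero, one_mul]
    rcases le_or_gt s (⟪y, e'⟫ * Θ y) with hg | hg
    · refine le_trans ?_ (hwη y hy hg)
      have hb : ⟪y, e'⟫ ≤ M := by
        have := real_inner_le_norm y e'
        rw [he', mul_one] at this
        exact this.trans (hp.norm_le y hy.1)
      have hgM : ⟪y, e'⟫ * Θ y - s ≤ M * M := by
        have := mul_le_mul hb (hp.le y hy.1) (hp.nonneg hy.1) hM.le
        linarith
      have h5 := mul_le_mul_of_nonneg_left (posPow_le (k := k + 3) (by positivity) hgM) hAp.le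
      have h6 : A * (M * M) ^ (k + 3) = η := by
        rw [hA]; field_simp
      linarith
    · rw [posPow_of_nonpos (by omega) (by linarith)]
      have := hwε y hy
      linarith
  · intro y hy hyD t ht _
    rw [reflDiff_boundary hB hbc he' hy hyD (zero_lt_one.trans ht)]
    have hg : ⟪y, e'⟫ * Θ y = 0 := by
      rcases closedHalf_diff hB hy hyD with h2 | h2
      · rw [hB.isOpen.frontier_eq] at h2
        have : ¬ 0 < Θ y := fun h3 => h2.2 ((hp.mem_iff y).2 h3)
        rw [le_antisymm (not_lt.1 this) (hp.nonneg hy.1), mul_zero]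
      · rw [h2, zero_mul]
    simp only [hg]
    rw [posPow_of_nonpos (by omega) (by linarith), mul_zero, zero_add]
    have hy1 := (hh y hy).2
    refine mul_nonpos_of_nonneg_of_nonpos (Real.exp_pos _).le ?_
    exact mul_nonpos_of_nonneg_of_nonpos hεp.le (by linarith)
  · intro y hy t ht _
    exact hsup e' he' y hy.1 t (zero_lt_one.trans ht)
  · intro y hy t _ _
    exact hsub y (halfDom_subset_closedHalf B e' hy) t

/-- Lemma `teopohob` of the paper:
under hypotheses (F1)–(F4) and (U2), if `e ∈ S` satisfies the reflection
inequality (U1) for the initial profile `u₀`, then all unit vectors `e'` close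
enough to `e` belong to the set
`𝓜 = {e ∈ S : z ≥ z ∘ σ_e on B(e) for all z ∈ ω(u)}`. -/
theorem omegaReflSet_is_nbhd_of_initial_reflection_direction
    (N : ℕ) (hN : 2 ≤ N)
    (B : Set (EuclideanSpace ℝ (Fin N))) (hB : IsRadialDomain B)
    (𝓑 : Set (ℝ × EuclideanSpace ℝ (Fin N) × (Fin N → Fin N → ℝ)))
    (h𝓑open : IsOpen 𝓑) (h𝓑conv : Convex ℝ 𝓑)
    (h𝓑zero : ((0:ℝ), (0 : EuclideanSpace ℝ (Fin N)), (0 : Fin N → Fin N → ℝ)) ∈ 𝓑)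
    (F : ℝ → EuclideanSpace ℝ (Fin N) →
      (ℝ × EuclideanSpace ℝ (Fin N) × (Fin N → Fin N → ℝ)) → ℝ)
    -- (F1) reflection invariance
    (hF1dom : ∀ e : EuclideanSpace ℝ (Fin N), ‖e‖ = 1 → ∀ x ∈ B,
      ∀ v : ℝ, ∀ p : EuclideanSpace ℝ (Fin N), ∀ q : Fin N → Fin N → ℝ,
      (v, p, q) ∈ 𝓑 →
      reflHyp e x ∈ B ∧ (v, reflHyp e p, matConj (reflMat e) q) ∈ 𝓑)
    (hF1sym : ∀ e : EuclideanSpace ℝ (Fin N), ‖e‖ = 1 → ∀ t ∈ Ioi (0:ℝ), ∀ x ∈ B,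
      ∀ v : ℝ, ∀ p : EuclideanSpace ℝ (Fin N), ∀ q : Fin N → Fin N → ℝ,
      (v, p, q) ∈ 𝓑 →
      F t (reflHyp e x) (v, reflHyp e p, matConj (reflMat e) q) = F t x (v, p, q))
    -- (F2) regularity: continuity, uniform Lipschitz continuity in (u,p,q),
    -- differentiability with respect to the matrix variable q
    (hF_cont : ContinuousOn (fun z : ℝ × EuclideanSpace ℝ (Fin N) ×
        (ℝ × EuclideanSpace ℝ (Fin N) × (Fin N → Fin N → ℝ)) => F z.1 z.2.1 z.2.2)
      (Ici 0 ×ˢ closure B ×ˢ 𝓑))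
    (hF_lip : ∃ L > (0:ℝ), ∀ t ∈ Ici (0:ℝ), ∀ x ∈ B, ∀ P ∈ 𝓑, ∀ P' ∈ 𝓑,
      |F t x P - F t x P'| ≤ L * ‖P - P'‖)
    (Fq : ℝ → EuclideanSpace ℝ (Fin N) →
      (ℝ × EuclideanSpace ℝ (Fin N) × (Fin N → Fin N → ℝ)) →
      ((Fin N → Fin N → ℝ) →L[ℝ] ℝ))
    (hFq : ∀ t ∈ Ici (0:ℝ), ∀ x ∈ B,
      ∀ v : ℝ, ∀ p : EuclideanSpace ℝ (Fin N), ∀ q : Fin N → Fin N → ℝ,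
      (v, p, q) ∈ 𝓑 →
      HasFDerivAt (fun q' => F t x (v, p, q')) (Fq t x (v, p, q)) q)
    -- (F3) boundedness of F(·,·,0,0,0)
    (hF3 : ∃ C : ℝ, ∀ t ∈ Ici (0:ℝ), ∀ x ∈ B,
      |F t x ((0:ℝ), (0 : EuclideanSpace ℝ (Fin N)), (0 : Fin N → Fin N → ℝ))| ≤ C)
    -- (F4) uniform ellipticity: ∂_{q_ij}F ξᵢξⱼ ≥ α₀ |ξ|²
    (α₀ : ℝ) (hα₀ : 0 < α₀)
    (hF4 : ∀ t ∈ Ici (0:ℝ), ∀ x ∈ B, ∀ P ∈ 𝓑, ∀ ξ : Fin N → ℝ,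
      α₀ * (∑ i, ξ i ^ 2) ≤ Fq t x P (fun i j => ξ i * ξ j))
    -- the solution and its derivatives
    (u : EuclideanSpace ℝ (Fin N) → ℝ → ℝ)
    (u₀ : EuclideanSpace ℝ (Fin N) → ℝ)
    (ut : EuclideanSpace ℝ (Fin N) → ℝ → ℝ)
    (Du : EuclideanSpace ℝ (Fin N) → ℝ → (EuclideanSpace ℝ (Fin N) →L[ℝ] ℝ))
    (D2u : EuclideanSpace ℝ (Fin N) → ℝ →
      (EuclideanSpace ℝ (Fin N) →L[ℝ] EuclideanSpace ℝ (Fin N) →L[ℝ] ℝ))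
    -- u ∈ C(B̄ × [0,∞))
    (hu_cont : ContinuousOn (fun p : EuclideanSpace ℝ (Fin N) × ℝ => u p.1 p.2)
      (closure B ×ˢ Ici 0))
    -- u ∈ C^{2,1}(B × (0,∞)): the derivatives exist and are continuous there
    (hut : ∀ x ∈ B, ∀ t ∈ Ioi (0:ℝ), HasDerivAt (fun s => u x s) (ut x t) t)
    (hDu : ∀ x ∈ B, ∀ t ∈ Ioi (0:ℝ), HasFDerivAt (fun y => u y t) (Du x t) x)
    (hD2u : ∀ x ∈ B, ∀ t ∈ Ioi (0:ℝ), HasFDerivAt (fun y => Du y t) (D2u x t) x)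
    (hreg : ContinuousOn (fun p : EuclideanSpace ℝ (Fin N) × ℝ =>
      (ut p.1 p.2, Du p.1 p.2, D2u p.1 p.2)) (B ×ˢ Ioi 0))
    -- the equation u_t = F(t,x,u,∇u,D²u) in B × (0,∞), with values in 𝓑
    (hdom : ∀ x ∈ B, ∀ t ∈ Ioi (0:ℝ),
      (u x t, gradVec (Du x t), hessMat (D2u x t)) ∈ 𝓑)
    (hPDE : ∀ x ∈ B, ∀ t ∈ Ioi (0:ℝ),
      ut x t = F t x (u x t, gradVec (Du x t), hessMat (D2u x t)))
    -- the boundary condition u = 0 on ∂B × (0,∞)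
    (hbc : ∀ x ∈ frontier B, ∀ t ∈ Ioi (0:ℝ), u x t = 0)
    -- the initial condition u(·,0) = u₀
    (hinit : ∀ x ∈ closure B, u x 0 = u₀ x)
    -- (U2): uniform boundedness
    (hU2 : ∃ C : ℝ, ∀ t ∈ Ici (0:ℝ), ∀ x ∈ closure B, |u x t| ≤ C)
    -- the direction e of the reflection inequality (U1)
    (e : EuclideanSpace ℝ (Fin N)) (he : ‖e‖ = 1)
    (hU1a : ∀ x ∈ halfDom B e, u₀ (reflHyp e x) ≤ u₀ x)
    (hU1b : ∃ x ∈ halfDom B e, u₀ (reflHyp e x) ≠ u₀ x) :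
    ∃ ε > (0:ℝ), ∀ e' : EuclideanSpace ℝ (Fin N), ‖e'‖ = 1 → ‖e' - e‖ < ε →
      e' ∈ omegaReflSet B u := by
  obtain ⟨L, hL, hlip⟩ := hF_lip
  refine nbhd_of_superAt hB hu_cont hbc hα₀ hL.le (fun e₁ he₁ x hx t ht =>
    superAt_diff hB.isOpen h𝓑open h𝓑conv he₁ (hF1dom e₁ he₁) (hF1sym e₁ he₁) hL.le hlip hFq hF4
      hut hDu hD2u hdom hPDE hx ht) he ?_ ?_
  · intro x hx
    unfold reflDiff
    rw [hinit x (subset_closure hx.1), hinit _ (subset_closure (hB.reflHyp_mem he hx.1))]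
    linarith [hU1a x hx]
  · obtain ⟨x, hx, hne⟩ := hU1b
    refine ⟨x, hx, ?_⟩
    unfold reflDiff
    rw [hinit x (subset_closure hx.1), hinit _ (subset_closure (hB.reflHyp_mem he hx.1))]
    exact sub_pos.2 (lt_of_le_of_ne (hU1a x hx) hne)

end
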